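/- Let S = {p_1, …, p_k} be a set of k distinct primes and let (q_n)_{n≥1} be an increasing sequence of positive integers each of which lies in A_S (i.e. all prime factors of every q_n belong to S). Then for every α ∈ (0,1), the sequence (q_n) is α-separated: there exists m₀ ∈ ℕ such that for all integers m, n with m₀ ≤ m < n, whenever s, t ≥ 1 are positive integers with 1 ≤ |s q_m − t q_n| < q_m^α, then s > m^{12}. -/

import Mathlib

/-!
Write `t * Y / (s * X) = (t / s) * ∏ p ^ e p` for `S`-smooth `X < Y`. If this ratio is extremely
close to `1` while `s` is a small power of `X`, Liouville's inequality forces some exponent `e p` to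
be of size comparable to `log X`. The Dirichlet pigeonhole then writes `e = N * c + r` with `N` of
size `log X`, `c` of bounded size, `r` of size `O(N)` and `V = ∏ p ^ (-c p)` a rational number
different from `1` but as close to it as we please. Hence the rational number `(t / s) * ∏ p ^ r p`,
whose height is `exp (O(N))`, is very close to `V ^ N`.

This is impossible by the method of Thue and Siegel: Siegel's lemma gives a nonzero polynomial
`P(x, y)`, of large degree in `x` and small degree in `y`, all of whose Hasse derivatives along the
curve `u ↦ (x u ^ N, y u)` at the point `(1, 1)` vanish to high order. Taylor expansion makes a
derivative of `P` at the rational point `(η, V)`, `η ≈ V ^ N`, tiny, a Wronskian zero estimate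
makes one of low order nonzero, and a nonzero rational number is bounded below by its denominator.
So `s` is at least a fixed power of `X`, which beats every power of `m` for `X = q m`, since
there are only `O((log y) ^ #S)` smooth numbers up to `y`.
-/

section ZeroEstimate

open Polynomial

section Determinants

variable {R ι : Type*} [CommRing R]

theorem coeff_prod_sum_of_natDegree_le {s : Finset ι} {f : ι → R[X]} {d : ι → ℕ}
    (h : ∀ i ∈ s, (f i).natDegree ≤ d i) :
    (∏ i ∈ s, f i).coeff (∑ i ∈ s, d i) = ∏ i ∈ s, (f i).coeff (d i) := by
  classical
  induction s using Finset.induction_on with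
  | empty => simp
  | insert a s ha ih =>
    have hs : ∀ i ∈ s, (f i).natDegree ≤ d i := fun i hi => h i (Finset.mem_insert_of_mem hi)
    rw [Finset.prod_insert ha, Finset.sum_insert ha, Finset.prod_insert ha,
      coeff_mul_add_eq_of_natDegree_le (h a (Finset.mem_insert_self a s))
        ((natDegree_prod_le _ _).trans (Finset.sum_le_sum hs)), ih hs]

variable [Fintype ι] [DecidableEq ι]

theorem natDegree_det_le_sum {A : Matrix ι ι R[X]} {d : ι → ℕ}
    (h : ∀ i j, (A i j).natDegree ≤ d j) : A.det.natDegree ≤ ∑ j, d j := by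
  rw [Matrix.det_apply]
  refine natDegree_sum_le_of_forall_le _ _ fun σ _ => ?_
  refine (natDegree_smul_le _ _).trans ((natDegree_prod_le _ _).trans ?_)
  exact Finset.sum_le_sum fun j _ => h (σ j) j

theorem coeff_det_sum {A : Matrix ι ι R[X]} {d : ι → ℕ} (h : ∀ i j, (A i j).natDegree ≤ d j) :
    A.det.coeff (∑ j, d j) = (Matrix.of fun i j => (A i j).coeff (d j)).det := by
  rw [Matrix.det_apply, Matrix.det_apply, finsetSum_coeff]
  refine Finset.sum_congr rfl fun σ _ => ?_
  rw [Units.smul_def, coeff_smul, Units.smul_def,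
    coeff_prod_sum_of_natDegree_le fun j _ => h (σ j) j]
  rfl

theorem dvd_det_mul_of_forall_dvd_mulVec {A : Matrix ι ι R} {v : ι → R} {a : R}
    (h : ∀ i, a ∣ A.mulVec v i) (i : ι) : a ∣ A.det * v i := by
  have hcramer : A.adjugate.mulVec (A.mulVec v) = A.det • v := by
    rw [Matrix.mulVec_mulVec, Matrix.adjugate_mul, Matrix.smul_mulVec, Matrix.one_mulVec]
  rw [← smul_eq_mul, ← Pi.smul_apply, ← hcramer, Matrix.mulVec, dotProduct]
  exact Finset.dvd_sum fun j _ => (h j).mul_left _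

end Determinants

section EulerOperator

variable {R : Type*} [CommRing R]

/-- The Euler operator `θ = X d/dX` on polynomials. -/
noncomputable def eulerOperator : Module.End R R[X] :=
  LinearMap.mulLeft R X ∘ₗ derivative

/-- The operator `N θ + l`. It describes how the derivation `N x ∂/∂x + y ∂/∂y` acts on the
coefficient of `y ^ l` in a polynomial in `x` and `y`. -/
noncomputable def twistedEulerOperator (N l : ℕ) : Module.End R R[X] :=
  N • eulerOperator + l • 1

theorem eulerOperator_apply (A : R[X]) : eulerOperator A = X * derivative A := rfl

theorem twistedEulerOperator_apply (N l : ℕ) (A : R[X]) :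
    twistedEulerOperator N l A = (N : R[X]) * (X * derivative A) + (l : R[X]) * A := by
  simp [twistedEulerOperator, eulerOperator_apply]

theorem coeff_twistedEulerOperator (N l i : ℕ) (A : R[X]) :
    (twistedEulerOperator N l A).coeff i = ((N * i + l : ℕ) : R) * A.coeff i := by
  rw [twistedEulerOperator_apply, coeff_add, coeff_natCast_mul, coeff_natCast_mul]
  cases i with
  | zero => simp
  | succ i => rw [coeff_X_mul, coeff_derivative]; push_cast; ring

theorem coeff_twistedEulerOperator_pow (N l j i : ℕ) (A : R[X]) :
    ((twistedEulerOperator N l ^ j) A).coeff i = ((N * i + l : ℕ) : R) ^ j * A.coeff i := by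
  induction j with
  | zero => simp
  | succ j ih => rw [pow_succ', Module.End.mul_apply, coeff_twistedEulerOperator, ih]; ring

theorem natDegree_twistedEulerOperator_pow_le (N l j : ℕ) (A : R[X]) :
    ((twistedEulerOperator N l ^ j) A).natDegree ≤ A.natDegree := by
  rw [natDegree_le_iff_coeff_eq_zero]
  intro i hi
  rw [coeff_twistedEulerOperator_pow, coeff_eq_zero_of_natDegree_lt hi, mul_zero]

theorem eulerOperator_pow_comp_mul (N l j : ℕ) (x w : R) (A : R[X]) :
    (eulerOperator ^ j) (A.comp (C x * X ^ N) * (C w * X) ^ l) =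
      ((twistedEulerOperator N l ^ j) A).comp (C x * X ^ N) * (C w * X) ^ l := by
  induction j with
  | zero => rfl
  | succ j ih =>
    rw [pow_succ', Module.End.mul_apply, ih, pow_succ', Module.End.mul_apply,
      eulerOperator_apply, twistedEulerOperator_apply]
    simp only [derivative_mul, derivative_comp, derivative_pow, derivative_C, derivative_X,
      add_comp, mul_comp, natCast_comp, X_comp, mul_pow]
    cases N <;> cases l <;> simp <;> ring

theorem pow_dvd_eulerOperator_pow {P : R[X]} {t : R} {M : ℕ} (h : (X - C t) ^ M ∣ P) (j : ℕ) :
    (X - C t) ^ (M - j) ∣ (eulerOperator ^ j) P := by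
  induction j with
  | zero => simpa
  | succ j ih =>
    rw [Nat.sub_succ, pow_succ', Module.End.mul_apply, eulerOperator_apply]
    exact (pow_sub_one_dvd_derivative_of_pow_dvd ih).mul_left _

theorem pow_dvd_of_pow_dvd_comp [IsDomain R] {D g : R[X]} {t : R} {M : ℕ}
    (hg : (derivative g).eval t ≠ 0) (h : (X - C t) ^ M ∣ D.comp g) :
    (X - C (g.eval t)) ^ M ∣ D := by
  rcases eq_or_ne D 0 with rfl | hD
  · exact dvd_zero _
  obtain ⟨r, hr⟩ : X - C t ∣ g - C (g.eval t) := by simp [dvd_iff_isRoot]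
  have hrt : r.eval t ≠ 0 := by
    have := congrArg (fun f => (derivative f).eval t) hr
    simp only [derivative_sub, derivative_C, sub_zero, derivative_mul, derivative_X, one_mul,
      eval_add, eval_mul, eval_sub, eval_X, eval_C, sub_self, zero_mul, add_zero] at this
    rwa [← this]
  obtain ⟨q, hq, hqt⟩ := exists_eq_pow_rootMultiplicity_mul_and_not_dvd D hD (g.eval t)
  set a := rootMultiplicity (g.eval t) D
  suffices hMa : M ≤ a from (pow_dvd_pow _ hMa).trans ⟨q, hq⟩
  by_contra! hlt
  have hcomp : D.comp g = (X - C t) ^ a * (r ^ a * q.comp g) := by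
    conv_lhs => rw [hq]
    rw [mul_comp, pow_comp, sub_comp, X_comp, C_comp, hr, mul_pow, mul_assoc]
  have hdvd : X - C t ∣ r ^ a * q.comp g := by
    have hsucc := (pow_dvd_pow (X - C t) (Nat.succ_le_of_lt hlt)).trans h
    rw [hcomp, pow_succ] at hsucc
    exact (mul_dvd_mul_iff_left (pow_ne_zero _ (X_sub_C_ne_zero t))).1 hsucc
  rw [dvd_iff_isRoot, IsRoot.def, eval_mul, eval_pow, eval_comp] at hdvd
  rw [dvd_iff_isRoot, IsRoot.def] at hqt
  exact mul_ne_zero (pow_ne_zero _ hrt) hqt hdvd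

end EulerOperator

section Wronskian

variable {R : Type*} [CommRing R]

/-- The restriction of a polynomial in `x` and `y`, viewed as a polynomial in `y` over `R[x]`, to
the curve `u ↦ (x₀ u ^ N, y₀ u)`. -/
noncomputable def curveRestriction (N : ℕ) (x₀ y₀ : R) : R[X][X] →+* R[X] :=
  eval₂RingHom (compRingHom (C x₀ * X ^ N)) (C y₀ * X)

/-- The matrix whose column `k` lists the iterated derivatives of the `k`-th nonzero coefficient of
`Q` under the derivation `N x ∂/∂x + y ∂/∂y`. -/
noncomputable def wronskianMatrix (N : ℕ) (Q : R[X][X]) :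
    Matrix (Fin Q.support.card) (Fin Q.support.card) R[X] :=
  Matrix.of fun j k => (twistedEulerOperator N (Q.support.orderEmbOfFin rfl k) ^ (j : ℕ))
    (Q.coeff (Q.support.orderEmbOfFin rfl k))

theorem natDegree_wronskianMatrix_le (N : ℕ) (Q : R[X][X]) (j k : Fin Q.support.card) :
    (wronskianMatrix N Q j k).natDegree ≤
      (Q.coeff (Q.support.orderEmbOfFin rfl k)).natDegree :=
  natDegree_twistedEulerOperator_pow_le _ _ _ _

theorem natDegree_det_wronskianMatrix_le {N d : ℕ} {Q : R[X][X]}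
    (hd : ∀ l, (Q.coeff l).natDegree ≤ d) :
    (wronskianMatrix N Q).det.natDegree ≤ Q.support.card * d := by
  refine (natDegree_det_le_sum fun j k =>
    (natDegree_wronskianMatrix_le N Q j k).trans (hd _)).trans_eq ?_
  simp

/-- The top coefficient of the determinant is a Vandermonde determinant in the numbers `N i + l`,
where `x ^ i` is the leading monomial of the coefficient of `y ^ l`. They are distinct because
their residues `l` modulo `N` are. -/
theorem det_wronskianMatrix_ne_zero [IsDomain R] [CharZero R] {N : ℕ} {Q : R[X][X]}
    (hQN : Q.natDegree < N) : (wronskianMatrix N Q).det ≠ 0 := by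
  set e := Q.support.orderEmbOfFin rfl
  set d : Fin Q.support.card → ℕ := fun k => (Q.coeff (e k)).natDegree
  have hcoeff : (Matrix.of fun j k => (wronskianMatrix N Q j k).coeff (d k)) =
      Matrix.of fun j k => (Q.coeff (e k)).leadingCoeff *
        (Matrix.vandermonde fun k => ((N * d k + e k : ℕ) : R)).transpose j k := by
    ext j k
    simp only [wronskianMatrix, Matrix.of_apply, coeff_twistedEulerOperator_pow,
      Matrix.transpose_apply, Matrix.vandermonde_apply]
    exact mul_comm _ _
  have heN (k) : e k < N :=
    (le_natDegree_of_mem_supp _ (Finset.orderEmbOfFin_mem _ rfl k)).trans_lt hQN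
  have hinj : Function.Injective fun k => ((N * d k + e k : ℕ) : R) := by
    intro a b hab
    have hmod := congrArg (· % N) (Nat.cast_injective hab)
    simp only [Nat.mul_add_mod, Nat.mod_eq_of_lt (heN _)] at hmod
    exact e.injective hmod
  intro hzero
  have hdet := coeff_det_sum (natDegree_wronskianMatrix_le N Q)
  rw [hzero, coeff_zero, hcoeff, Matrix.det_mul_row, Matrix.det_transpose] at hdet
  refine mul_ne_zero (Finset.prod_ne_zero_iff.2 fun k _ => leadingCoeff_ne_zero.2 ?_)
    (Matrix.det_vandermonde_ne_zero_iff.2 hinj) hdet.symm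
  exact mem_support_iff.1 (Finset.orderEmbOfFin_mem _ rfl k)

theorem mulVec_wronskianMatrix_comp (N : ℕ) (x₀ y₀ : R) (Q : R[X][X]) (j : Fin Q.support.card) :
    ((compRingHom (C x₀ * X ^ N)).mapMatrix (wronskianMatrix N Q)).mulVec
        (fun k => (C y₀ * X) ^ Q.support.orderEmbOfFin rfl k) j =
      (eulerOperator ^ (j : ℕ)) (curveRestriction N x₀ y₀ Q) := by
  have hsum : curveRestriction N x₀ y₀ Q = ∑ k, (Q.coeff (Q.support.orderEmbOfFin rfl k)).comp
      (C x₀ * X ^ N) * (C y₀ * X) ^ Q.support.orderEmbOfFin rfl k := by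
    rw [curveRestriction, coe_eval₂RingHom, eval₂_eq_sum, sum_def]
    nth_rewrite 1 [← Finset.map_orderEmbOfFin_univ Q.support rfl]
    rw [Finset.sum_map]
    rfl
  rw [hsum, map_sum]
  simp only [eulerOperator_pow_comp_mul]
  rfl

theorem pow_dvd_det_wronskianMatrix {K : Type*} [Field K] [CharZero K] {N M : ℕ} (hN : N ≠ 0)
    {Q : K[X][X]} (hQ : Q ≠ 0) {x₀ y₀ : K} (hx₀ : x₀ ≠ 0) (hy₀ : y₀ ≠ 0)
    (h : (X - C 1) ^ M ∣ curveRestriction N x₀ y₀ Q) :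
    (X - C x₀) ^ (M - (Q.support.card - 1)) ∣ (wronskianMatrix N Q).det := by
  have hm : 0 < Q.support.card := Finset.card_pos.2 (nonempty_support_iff.2 hQ)
  have hcurve : (derivative (C x₀ * X ^ N)).eval 1 ≠ 0 := by
    simp [derivative_X_pow, hx₀, hN]
  suffices hcomp : (X - C 1) ^ (M - (Q.support.card - 1)) ∣
      (wronskianMatrix N Q).det.comp (C x₀ * X ^ N) by
    simpa using pow_dvd_of_pow_dvd_comp hcurve hcomp
  have hmulVec (j : Fin Q.support.card) : (X - C 1) ^ (M - (Q.support.card - 1)) ∣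
      ((compRingHom (C x₀ * X ^ N)).mapMatrix (wronskianMatrix N Q)).mulVec
        (fun k => (C y₀ * X) ^ Q.support.orderEmbOfFin rfl k) j := by
    rw [mulVec_wronskianMatrix_comp]
    exact (pow_dvd_pow _ (by omega)).trans (pow_dvd_eulerOperator_pow h j)
  have hdvd := dvd_det_mul_of_forall_dvd_mulVec hmulVec ⟨0, hm⟩
  rw [← RingHom.map_det] at hdvd
  refine IsCoprime.dvd_of_dvd_mul_right (IsCoprime.pow ?_) hdvd
  refine (irreducible_X_sub_C (1 : K)).coprime_iff_not_dvd.2 ?_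
  rw [dvd_iff_isRoot]
  simpa using hy₀

/-- The determinant has a zero of order at least `M i - (#Q.support - 1)` at each `x i`, while its
degree is at most `#Q.support * d`. -/
theorem sum_order_le {K ι : Type*} [Field K] [CharZero K] {N d : ℕ} {Q : K[X][X]} (hQ : Q ≠ 0)
    (hQN : Q.natDegree < N) (hd : ∀ l, (Q.coeff l).natDegree ≤ d) {s : Finset ι} {x y : ι → K}
    (hx : Function.Injective x) (hx0 : ∀ i, x i ≠ 0) (hy0 : ∀ i, y i ≠ 0) {M : ι → ℕ}
    (h : ∀ i ∈ s, (X - C 1) ^ M i ∣ curveRestriction N (x i) (y i) Q) :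
    ∑ i ∈ s, M i ≤ (Q.natDegree + 1) * d + s.card * Q.natDegree := by
  have hcard : Q.support.card ≤ Q.natDegree + 1 := card_supp_le_succ_natDegree Q
  have hprod : ∏ i ∈ s, (X - C (x i)) ^ (M i - Q.natDegree) ∣ (wronskianMatrix N Q).det := by
    refine Finset.prod_dvd_of_coprime
      (fun i _ j _ hij => (pairwise_coprime_X_sub_C hx hij).pow) fun i hi => ?_
    exact (pow_dvd_pow _ (by omega)).trans
      (pow_dvd_det_wronskianMatrix (by omega) hQ (hx0 i) (hy0 i) (h i hi))
  have hdeg := (natDegree_le_of_dvd hprod (det_wronskianMatrix_ne_zero hQN)).trans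
    ((natDegree_det_wronskianMatrix_le hd).trans (Nat.mul_le_mul_right d hcard))
  rw [natDegree_prod_of_monic _ _ fun i _ => (monic_X_sub_C _).pow _] at hdeg
  simp only [natDegree_pow, natDegree_X_sub_C, mul_one] at hdeg
  calc ∑ i ∈ s, M i ≤ ∑ i ∈ s, ((M i - Q.natDegree) + Q.natDegree) :=
        Finset.sum_le_sum fun i _ => by omega
    _ = ∑ i ∈ s, (M i - Q.natDegree) + s.card * Q.natDegree := by
        rw [Finset.sum_add_distrib, Finset.sum_const, smul_eq_mul]
    _ ≤ _ := by gcongr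

end Wronskian

section Jets

variable {R : Type*} [CommRing R] {n L : ℕ}

/-- For `p(x, y) = ∑ p (i, l) x ^ i y ^ l`, the `j`-th Taylor coefficient at `u = 1` of
`u ↦ p(x u ^ N, y u)`. -/
def curveJet (N : ℕ) (p : Fin n × Fin L → R) (x y : R) (j : ℕ) : R :=
  ∑ e, p e * (x ^ (e.1 : ℕ) * y ^ (e.2 : ℕ)) * ((N * e.1 + e.2).choose j : R)

/-- The polynomial `∑ p (i, l) x ^ i y ^ l` as a polynomial in `y` over `R[x]`. -/
noncomputable def bivariatePolynomial (p : Fin n × Fin L → R) : R[X][X] :=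
  ∑ e, monomial e.2 (monomial e.1 (p e))

theorem coeff_bivariatePolynomial (p : Fin n × Fin L → R) (e : Fin n × Fin L) :
    ((bivariatePolynomial p).coeff e.2).coeff e.1 = p e := by
  rw [bivariatePolynomial, finsetSum_coeff, finsetSum_coeff, Finset.sum_eq_single e]
  · simp
  · intro f _ hfe
    by_cases hsnd : f.2 = e.2
    · have hfst : f.1 ≠ e.1 := fun hfst => hfe (Prod.ext hfst hsnd)
      simp [coeff_monomial, hsnd, Fin.val_inj, hfst]
    · simp [coeff_monomial, Fin.val_inj, hsnd]
  · simp

theorem bivariatePolynomial_ne_zero {p : Fin n × Fin L → R} (hp : p ≠ 0) :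
    bivariatePolynomial p ≠ 0 := by
  obtain ⟨e, he⟩ := Function.ne_iff.1 hp
  intro hzero
  apply he
  simpa [hzero] using (coeff_bivariatePolynomial p e).symm

theorem natDegree_bivariatePolynomial_le (p : Fin n × Fin L → R) :
    (bivariatePolynomial p).natDegree ≤ L - 1 :=
  natDegree_sum_le_of_forall_le _ _ fun e _ =>
    (natDegree_monomial_le _).trans (Nat.le_sub_one_of_lt e.2.2)

theorem natDegree_coeff_bivariatePolynomial_le (p : Fin n × Fin L → R) (l : ℕ) :
    ((bivariatePolynomial p).coeff l).natDegree ≤ n - 1 := by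
  rw [bivariatePolynomial, finsetSum_coeff]
  refine natDegree_sum_le_of_forall_le _ _ fun e _ => ?_
  rw [coeff_monomial]
  split_ifs
  · exact (natDegree_monomial_le _).trans (Nat.le_sub_one_of_lt e.1.2)
  · simp

theorem curveRestriction_bivariatePolynomial (N : ℕ) (p : Fin n × Fin L → R) (x y : R) :
    curveRestriction N x y (bivariatePolynomial p) =
      ∑ e, monomial (N * e.1 + e.2) (p e * (x ^ (e.1 : ℕ) * y ^ (e.2 : ℕ))) := by
  rw [bivariatePolynomial, map_sum]
  refine Finset.sum_congr rfl fun e _ => ?_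
  rw [curveRestriction, coe_eval₂RingHom, eval₂_monomial, coe_compRingHom_apply, monomial_comp,
    ← C_mul_X_pow_eq_monomial]
  simp only [map_mul, map_pow]
  ring

theorem pow_dvd_curveRestriction_bivariatePolynomial {N M : ℕ} {p : Fin n × Fin L → R} {x y : R}
    (h : ∀ j < M, curveJet N p x y j = 0) :
    (X - C 1) ^ M ∣ curveRestriction N x y (bivariatePolynomial p) := by
  rw [X_sub_C_pow_dvd_iff, X_pow_dvd_iff]
  intro j hj
  rw [← taylor_apply, taylor_coeff, curveRestriction_bivariatePolynomial, map_sum,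
    eval_finsetSum, ← h j hj, curveJet]
  refine Finset.sum_congr rfl fun e _ => ?_
  rw [hasseDeriv_monomial, eval_monomial]
  simp [mul_comm]

theorem exists_curveJet_ne_zero {K : Type*} [Field K] [CharZero K] {N M : ℕ} (hLN : L ≤ N)
    {p : Fin n × Fin L → K} (hp : p ≠ 0) {x y : K} (hx0 : x ≠ 0) (hx1 : x ≠ 1) (hy0 : y ≠ 0)
    (h : ∀ j < M, curveJet N p 1 1 j = 0) :
    ∃ j, M + j + 2 ≤ L * (n + 1) ∧ curveJet N p x y j ≠ 0 := by
  by_contra! hvan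
  obtain ⟨e, -⟩ := Function.ne_iff.1 hp
  obtain ⟨n, rfl⟩ : ∃ n', n = n' + 1 := ⟨n - 1, by have := e.1.pos; omega⟩
  obtain ⟨L, rfl⟩ : ∃ L', L = L' + 1 := ⟨L - 1, by have := e.2.pos; omega⟩
  rw [add_assoc, one_add_one_eq_two] at hvan
  have hdegY : (bivariatePolynomial p).natDegree ≤ L := natDegree_bivariatePolynomial_le p
  have hdvd : ∀ i ∈ Finset.univ, (X - C 1) ^ (![M, (L + 1) * (n + 2) - 1 - M] i) ∣
      curveRestriction N (![1, x] i) (![1, y] i) (bivariatePolynomial p) := by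
    simp only [Finset.mem_univ, forall_const, Fin.forall_fin_two]
    exact ⟨pow_dvd_curveRestriction_bivariatePolynomial h,
      pow_dvd_curveRestriction_bivariatePolynomial fun j hj =>
        hvan j (by simp only [Matrix.cons_val_one, Matrix.cons_val_fin_one] at hj; omega)⟩
  have hinj : Function.Injective ![1, x] := by
    simp [Function.Injective, Fin.forall_fin_two, hx1, hx1.symm]
  have hle := sum_order_le (bivariatePolynomial_ne_zero hp) (by omega)
    (natDegree_coeff_bivariatePolynomial_le p) hinj (by simp [Fin.forall_fin_two, hx0])
    (by simp [Fin.forall_fin_two, hy0]) hdvd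
  have hbound : ((bivariatePolynomial p).natDegree + 1) * n ≤ (L + 1) * n := by gcongr
  have hexpand : (L + 1) * (n + 2) = (L + 1) * n + 2 * (L + 1) := by ring
  simp only [Fin.sum_univ_two, Matrix.cons_val_zero, Matrix.cons_val_one,
    Matrix.cons_val_fin_one, Finset.card_univ, Fintype.card_fin, Nat.add_sub_cancel] at hle
  omega

end Jets

end ZeroEstimate

section ThueSiegel

section BinomialSums

theorem choose_mul_one_add_pow {R : Type*} [CommSemiring R] {e D : ℕ} (he : e ≤ D) (j : ℕ)
    (h : R) : (e.choose j : R) * (1 + h) ^ e =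
      (1 + h) ^ j * ∑ k ∈ Finset.range (D + 1),
        (e.choose (k + j) : R) * ((k + j).choose j : R) * h ^ k := by
  rcases lt_or_ge e j with hlt | hge
  · rw [Nat.choose_eq_zero_of_lt hlt, Finset.sum_eq_zero]
    · simp
    · intro k _
      rw [Nat.choose_eq_zero_of_lt (by omega : e < k + j)]
      simp
  · obtain ⟨m, rfl⟩ := Nat.exists_eq_add_of_le hge
    have hbinom : (1 + h) ^ m = ∑ k ∈ Finset.range (D + 1), (m.choose k : R) * h ^ k := by
      rw [add_comm, add_pow]
      refine (Finset.sum_congr rfl fun k _ => by rw [one_pow, mul_one, mul_comm]).trans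
        (Finset.sum_subset (Finset.range_subset_range.2 (by omega)) fun k _ hk => ?_)
      rw [Nat.choose_eq_zero_of_lt (by simpa using hk), Nat.cast_zero, zero_mul]
    rw [pow_add, mul_left_comm, hbinom, Finset.mul_sum]
    congr 1
    refine Finset.sum_congr rfl fun k _ => ?_
    have htrinomial := Nat.choose_mul (n := j + m) (Nat.le_add_left j k)
    rw [Nat.add_sub_cancel, Nat.add_sub_cancel_left] at htrinomial
    rw [← mul_assoc, ← Nat.cast_mul, ← Nat.cast_mul, htrinomial]

theorem sum_mul_choose_mul_one_add_pow {R ι : Type*} [CommSemiring R] {s : Finset ι} {e : ι → ℕ}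
    {D : ℕ} (he : ∀ i ∈ s, e i ≤ D) (p : ι → R) (j : ℕ) (h : R) :
    ∑ i ∈ s, p i * (((e i).choose j : R) * (1 + h) ^ e i) =
      (1 + h) ^ j * ∑ k ∈ Finset.range (D + 1),
        (∑ i ∈ s, p i * ((e i).choose (k + j) : R)) * ((k + j).choose j : R) * h ^ k := by
  simp only [Finset.mul_sum, Finset.sum_mul]
  rw [Finset.sum_comm]
  refine Finset.sum_congr rfl fun i hi => ?_
  rw [choose_mul_one_add_pow (he i hi), Finset.mul_sum, Finset.mul_sum]
  exact Finset.sum_congr rfl fun k _ => by ring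

/-- If `P(z) = ∑ p i * z ^ e i` vanishes to order `M` at `1`, then its `j`-th derivative vanishes
there to order `M - j`. -/
theorem abs_sum_choose_mul_pow_le {ι : Type*} {s : Finset ι} {p : ι → ℝ} {e : ι → ℕ}
    {M : ℕ} (hvan : ∀ m < M, ∑ i ∈ s, p i * ((e i).choose m : ℝ) = 0)
    (j : ℕ) {h : ℝ} (hh : |h| ≤ 1) :
    |∑ i ∈ s, p i * (((e i).choose j : ℝ) * (1 + h) ^ e i)| ≤
      (∑ i ∈ s, |p i| * 4 ^ e i) * |h| ^ (M - j) := by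
  have hdeg (i) (hi : i ∈ s) : e i ≤ s.sup e := Finset.le_sup hi
  have hterm (k : ℕ) : |(∑ i ∈ s, p i * ((e i).choose (k + j) : ℝ)) * ((k + j).choose j) * h ^ k| ≤
      (∑ i ∈ s, |p i| * (e i).choose (k + j)) * (k + j).choose j * |h| ^ (M - j) := by
    rw [abs_mul, abs_mul, abs_pow, Nat.abs_cast]
    rcases lt_or_ge (k + j) M with hlt | hge
    · rw [hvan _ hlt, abs_zero, zero_mul, zero_mul]
      positivity
    · refine mul_le_mul ?_ (pow_le_pow_of_le_one (abs_nonneg h) hh (by omega)) (by positivity)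
        (by positivity)
      gcongr
      refine (Finset.abs_sum_le_sum_abs _ _).trans_eq (Finset.sum_congr rfl fun i _ => ?_)
      rw [abs_mul, Nat.abs_cast]
  have hpow (i) : ((e i).choose j : ℝ) * (1 + 1) ^ e i ≤ 4 ^ e i := by
    have hchoose : ((e i).choose j : ℝ) ≤ 2 ^ e i := by exact_mod_cast Nat.choose_le_two_pow _ _
    calc _ ≤ (2 : ℝ) ^ e i * (1 + 1) ^ e i := by gcongr
      _ = 4 ^ e i := by rw [← mul_pow]; norm_num
  have hone : |1 + h| ≤ 1 + 1 := (abs_add_le 1 h).trans (by rw [abs_one]; linarith)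
  rw [sum_mul_choose_mul_one_add_pow hdeg, abs_mul, abs_pow]
  calc _ ≤ (1 + 1) ^ j * ∑ k ∈ Finset.range (s.sup e + 1),
          (∑ i ∈ s, |p i| * (e i).choose (k + j)) * (k + j).choose j * |h| ^ (M - j) := by
        gcongr
        exact (Finset.abs_sum_le_sum_abs _ _).trans (Finset.sum_le_sum fun k _ => hterm k)
    _ = (∑ i ∈ s, |p i| * ((e i).choose j * (1 + 1) ^ e i)) * |h| ^ (M - j) := by
        rw [sum_mul_choose_mul_one_add_pow hdeg, ← Finset.sum_mul, mul_assoc]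
        simp only [one_pow, mul_one]
    _ ≤ _ := by
        gcongr with i
        exact hpow i

theorem abs_one_add_pow_sub_one_le {τ : ℝ} (hτ : |τ| ≤ 1) (i : ℕ) :
    |(1 + τ) ^ i - 1| ≤ 2 ^ i * |τ| := by
  suffices h : |(1 + τ) ^ i - 1| ≤ (2 ^ i - 1) * |τ| from
    h.trans (mul_le_mul_of_nonneg_right (by linarith) (abs_nonneg τ))
  have hone : |1 + τ| ≤ 2 := (abs_add_le 1 τ).trans (by rw [abs_one]; linarith)
  induction i with
  | zero => simp
  | succ i ih =>
    calc |(1 + τ) ^ (i + 1) - 1| = |((1 + τ) ^ i - 1) * (1 + τ) + τ| := by ring_nf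
      _ ≤ |(1 + τ) ^ i - 1| * |1 + τ| + |τ| := by
        rw [← abs_mul]; exact abs_add_le _ _
      _ ≤ ((2 ^ i - 1) * |τ|) * 2 + |τ| := by
        gcongr
        exact (abs_nonneg _).trans ih
      _ = (2 ^ (i + 1) - 1) * |τ| := by ring

end BinomialSums

section JetBounds

variable {n L : ℕ}

theorem mul_fst_add_snd_le {N : ℕ} (hLN : L ≤ N) (e : Fin n × Fin L) :
    N * e.1 + e.2 ≤ n * N := by
  calc N * (e.1 : ℕ) + e.2 ≤ (e.1 + 1) * N := by linarith [e.2.2]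
    _ ≤ n * N := Nat.mul_le_mul_right _ e.1.2

theorem map_curveJet {R R' : Type*} [CommRing R] [CommRing R'] (f : R →+* R') (N : ℕ)
    (p : Fin n × Fin L → R) (x y : R) (j : ℕ) :
    f (curveJet N p x y j) = curveJet N (fun e => f (p e)) (f x) (f y) j := by
  simp [curveJet]

attribute [local instance] Matrix.seminormedAddCommGroup

/-- Siegel's lemma for `M` equations in `n L` unknowns: `4 M ≤ 3 n L` makes its exponent
`M / (n L - M)` at most `3`. -/
theorem exists_curveJet_eq_zero {M N : ℕ} (hM : 0 < M) (hMnL : 4 * M ≤ 3 * (n * L)) (hLN : L ≤ N) :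
    ∃ p : Fin n × Fin L → ℤ, p ≠ 0 ∧ (∀ j < M, curveJet N p 1 1 j = 0) ∧
      ∀ e, |(p e : ℝ)| ≤ 2 ^ (6 * (n * N)) := by
  set A : Matrix (Fin M) (Fin n × Fin L) ℤ :=
    Matrix.of fun j e => ((N * e.1 + e.2).choose j : ℤ) with hA
  obtain ⟨p, hp0, hAp, hp⟩ := Int.Matrix.exists_ne_zero_int_vec_norm_le A
    (by simp only [Fintype.card_fin, Fintype.card_prod]; omega) (by simpa using hM)
  refine ⟨p, hp0, fun j hj => ?_, fun e => ?_⟩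
  · refine Eq.trans ?_ (congrFun hAp ⟨j, hj⟩)
    simp [curveJet, Matrix.mulVec, dotProduct, hA, mul_comm]
  have hnorm : max 1 ‖A‖ ≤ 2 ^ (n * N) := by
    refine max_le (one_le_pow₀ one_le_two) ((Matrix.norm_le_iff (by positivity)).2 fun j e => ?_)
    rw [hA, Matrix.of_apply, Int.norm_eq_abs, Int.cast_natCast, Nat.abs_cast]
    exact_mod_cast (Nat.choose_le_two_pow _ _).trans
      (Nat.pow_le_pow_right two_pos (mul_fst_add_snd_le hLN e))
  have hcard : ((n * L : ℕ) : ℝ) ≤ 2 ^ (n * N) := by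
    exact_mod_cast (Nat.mul_le_mul_left n hLN).trans Nat.lt_two_pow_self.le
  have hexponent : (M : ℝ) / ((n * L : ℕ) - M) ≤ (3 : ℕ) := by
    have h4M : 4 * (M : ℝ) ≤ 3 * (n * L : ℕ) := by exact_mod_cast hMnL
    have hM' : (0 : ℝ) < M := by exact_mod_cast hM
    rw [div_le_iff₀ (by linarith)]
    push_cast at h4M ⊢
    linarith
  have hnL : 1 ≤ ((n * L : ℕ) : ℝ) := by exact_mod_cast (by omega : 1 ≤ n * L)
  simp only [Fintype.card_prod, Fintype.card_fin] at hp
  calc |(p e : ℝ)| = ‖p e‖ := (Int.norm_eq_abs _).symm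
    _ ≤ ‖p‖ := norm_le_pi_norm p e
    _ ≤ _ := hp
    _ ≤ ((n * L : ℕ) * max 1 ‖A‖) ^ ((3 : ℕ) : ℝ) := Real.rpow_le_rpow_of_exponent_le
        (one_le_mul_of_one_le_of_one_le hnL (le_max_left _ _)) hexponent
    _ ≤ (2 ^ (n * N) * 2 ^ (n * N)) ^ 3 := by
        rw [Real.rpow_natCast]
        gcongr
    _ = 2 ^ (6 * (n * N)) := by ring

theorem abs_curveJet_le {M N : ℕ} (hLN : L ≤ N) {p : Fin n × Fin L → ℝ}
    (h : ∀ j < M, curveJet N p 1 1 j = 0) {V τ : ℝ} (hV : |V - 1| ≤ 1) (hτ : |τ| ≤ 1) (j : ℕ) :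
    |curveJet N p (V ^ N * (1 + τ)) V j| ≤
      (∑ e, |p e|) * 4 ^ (n * N) * (|V - 1| ^ (M - j) + 2 ^ n * |τ|) := by
  set deg : Fin n × Fin L → ℕ := fun e => N * e.1 + e.2
  have hdeg (e) : (4 : ℝ) ^ deg e ≤ 4 ^ (n * N) :=
    pow_le_pow_right₀ (by norm_num) (mul_fst_add_snd_le hLN e)
  have hsplit : curveJet N p (V ^ N * (1 + τ)) V j =
      ∑ e, p e * ((deg e).choose j * (1 + (V - 1)) ^ deg e) +
        ∑ e, p e * ((deg e).choose j * V ^ deg e * ((1 + τ) ^ (e.1 : ℕ) - 1)) := by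
    rw [curveJet, ← Finset.sum_add_distrib]
    refine Finset.sum_congr rfl fun e _ => ?_
    simp only [deg]
    rw [add_sub_cancel, mul_pow, ← pow_mul, pow_add]
    ring
  have hmain := abs_sum_choose_mul_pow_le (s := Finset.univ) (p := p) (e := deg)
    (by simpa [curveJet] using h) j hV
  have hterm (e) : |p e * ((deg e).choose j * V ^ deg e * ((1 + τ) ^ (e.1 : ℕ) - 1))| ≤
      |p e| * (4 ^ (n * N) * (2 ^ n * |τ|)) := by
    have hV2 : |V| ≤ 2 := by linarith [abs_sub_abs_le_abs_sub V 1, abs_one (α := ℝ)]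
    have hchoose : ((deg e).choose j : ℝ) ≤ 2 ^ deg e := by
      exact_mod_cast Nat.choose_le_two_pow _ _
    have hτe : |(1 + τ) ^ (e.1 : ℕ) - 1| ≤ 2 ^ n * |τ| :=
      (abs_one_add_pow_sub_one_le hτ _).trans (by gcongr; exacts [one_le_two, e.1.2.le])
    rw [abs_mul, abs_mul, abs_mul, abs_pow, Nat.abs_cast]
    gcongr
    calc ((deg e).choose j : ℝ) * |V| ^ deg e ≤ 2 ^ deg e * 2 ^ deg e := by gcongr
      _ = 4 ^ deg e := by rw [← mul_pow]; norm_num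
      _ ≤ _ := hdeg e
  rw [hsplit]
  calc _ ≤ (∑ e, |p e| * 4 ^ deg e) * |V - 1| ^ (M - j) +
        ∑ e, |p e| * (4 ^ (n * N) * (2 ^ n * |τ|)) :=
        (abs_add_le _ _).trans (add_le_add hmain
          ((Finset.abs_sum_le_sum_abs _ _).trans (Finset.sum_le_sum fun e _ => hterm e)))
    _ ≤ (∑ e, |p e| * 4 ^ (n * N)) * |V - 1| ^ (M - j) +
        ∑ e, |p e| * (4 ^ (n * N) * (2 ^ n * |τ|)) := by
        gcongr ?_ * _ + _
        exact Finset.sum_le_sum fun e _ => mul_le_mul_of_nonneg_left (hdeg e) (abs_nonneg _)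
    _ = _ := by rw [← Finset.sum_mul, ← Finset.sum_mul]; ring

theorem one_le_mul_abs_curveJet {N a b c d j : ℕ} (hb : b ≠ 0) (hd : d ≠ 0)
    {p : Fin n × Fin L → ℤ} (h : curveJet N (fun e => (p e : ℝ)) (c / d) (a / b) j ≠ 0) :
    1 ≤ (d : ℝ) ^ n * (b : ℝ) ^ L * |curveJet N (fun e => (p e : ℝ)) (c / d) (a / b) j| := by
  have hcast : (d : ℝ) ^ n * (b : ℝ) ^ L * curveJet N (fun e => (p e : ℝ)) (c / d) (a / b) j =
      ((∑ e, p e * (c ^ (e.1 : ℕ) * d ^ (n - e.1) * (a ^ (e.2 : ℕ) * b ^ (L - e.2))) *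
        (N * e.1 + e.2).choose j : ℤ) : ℝ) := by
    push_cast
    rw [curveJet, Finset.mul_sum]
    refine Finset.sum_congr rfl fun e _ => ?_
    rw [← pow_sub_mul_pow (d : ℝ) e.1.2.le, ← pow_sub_mul_pow (b : ℝ) e.2.2.le, div_pow, div_pow]
    field_simp
  have hpos : (0 : ℝ) < (d : ℝ) ^ n * (b : ℝ) ^ L := by positivity
  have hne := mul_ne_zero hpos.ne' h
  rw [← abs_of_pos hpos, ← abs_mul]
  rw [hcast] at hne ⊢
  exact_mod_cast Int.one_le_abs (Int.cast_ne_zero.1 hne)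

end JetBounds

/-- An integral auxiliary polynomial vanishing to order `3 n L` along `u ↦ (u ^ N, u)` at `u = 1` is
evaluated, together with its jets, at the nearby rational point `(c / d, a / b)`. -/
theorem one_le_of_rational_approximation {n L N a b c d : ℕ} {τ : ℝ} (hn : n ≠ 0) (hL : L ≠ 0)
    (hLN : L ≤ N) (ha : a ≠ 0) (hb : b ≠ 0) (hc : c ≠ 0) (hd : d ≠ 0) (hcd : c ≠ d)
    (hab : |(a : ℝ) / b - 1| ≤ 1) (hτ : |τ| ≤ 1)
    (hη : (c : ℝ) / d = ((a : ℝ) / b) ^ N * (1 + τ)) :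
    1 ≤ (d : ℝ) ^ (4 * n) * (b : ℝ) ^ L *
      (2 ^ (10 * (4 * n * N)) * (|(a : ℝ) / b - 1| ^ (n * L) + |τ|)) := by
  have hnL : L ≤ n * L := Nat.le_mul_of_pos_left _ (Nat.pos_of_ne_zero hn)
  have hη1 : (c : ℝ) / d ≠ 1 := by
    rw [Ne, div_eq_one_iff_eq (by exact_mod_cast hd)]
    exact_mod_cast hcd
  obtain ⟨p, hp0, hvan, hp⟩ := exists_curveJet_eq_zero (n := 4 * n) (M := 3 * (n * L))
    (by positivity) (le_of_eq (by ring)) hLN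
  replace hvan (j) (hj : j < 3 * (n * L)) : curveJet N (fun e => (p e : ℝ)) 1 1 j = 0 := by
    simpa [hvan j hj] using (map_curveJet (Int.castRingHom ℝ) N p 1 1 j).symm
  obtain ⟨j, hj, hjet⟩ := exists_curveJet_ne_zero hLN
    (fun h => hp0 (funext fun e => by simpa using congrFun h e))
    (by positivity) hη1 (by positivity : (a : ℝ) / b ≠ 0) hvan
  have horder : n * L ≤ 3 * (n * L) - j := by
    have : L * (4 * n + 1) = 4 * (n * L) + L := by ring
    omega
  refine (one_le_mul_abs_curveJet hb hd hjet).trans ?_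
  rw [hη]
  gcongr
  set W := 4 * n * N
  have hnW : 4 * n ≤ W := Nat.le_mul_of_pos_right _ (by omega)
  have hsum : ∑ e, |(p e : ℝ)| ≤ 2 ^ (7 * W) := by
    have hcard : ((4 * n * L : ℕ) : ℝ) ≤ 2 ^ W := by
      exact_mod_cast (Nat.mul_le_mul_left _ hLN).trans Nat.lt_two_pow_self.le
    calc ∑ e, |(p e : ℝ)| ≤ (4 * n * L : ℕ) * 2 ^ (6 * W) := by
          simpa using Finset.sum_le_card_nsmul Finset.univ _ _ fun e _ => hp e
      _ ≤ 2 ^ W * 2 ^ (6 * W) := by gcongr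
      _ = 2 ^ (7 * W) := by ring
  calc _ ≤ _ := abs_curveJet_le hLN hvan hab hτ j
    _ ≤ 2 ^ (7 * W) * 4 ^ W * (2 ^ W * |(a : ℝ) / b - 1| ^ (n * L) + 2 ^ W * |τ|) := by
        have hpow := pow_le_pow_of_le_one (abs_nonneg _) hab horder
        have hone : (1 : ℝ) ≤ 2 ^ W := one_le_pow₀ one_le_two
        gcongr
        · exact hpow.trans (le_mul_of_one_le_left (by positivity) hone)
        · exact one_le_two
    _ = _ := by rw [show (4 : ℝ) ^ W = 2 ^ (2 * W) by rw [pow_mul (2 : ℝ) 2 W]; norm_num]; ring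

end ThueSiegel

section RationalApproximation

theorem one_le_exp_of_rational_approximation {C Γ lam σ τ : ℝ} {n L N a b c d : ℕ} (hn : n ≠ 0)
    (hL : L ≠ 0) (hLN : L ≤ N) (ha : a ≠ 0) (hb : b ≠ 0) (hc : c ≠ 0) (hd : d ≠ 0) (hcd : c ≠ d)
    (hlam : 0 ≤ lam) (hσ : 0 ≤ σ) (hbΓ : Real.log b ≤ Γ) (hdC : Real.log d ≤ C * N)
    (hV : |(a : ℝ) / b - 1| ≤ Real.exp (-lam)) (hτ : |τ| ≤ Real.exp (-σ))
    (hη : (c : ℝ) / d = ((a : ℝ) / b) ^ N * (1 + τ)) :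
    1 ≤ Real.exp (4 * (C + 7) * (n * N) + Γ * L - lam * (n * L)) +
      Real.exp (4 * (C + 7) * (n * N) + Γ * L - σ) := by
  have hdpow : (d : ℝ) ^ (4 * n) ≤ Real.exp (4 * C * (n * N)) := by
    calc (d : ℝ) ^ (4 * n) ≤ Real.exp (C * N) ^ (4 * n) := by
          gcongr
          exact (Real.log_le_iff_le_exp (by positivity)).1 hdC
      _ = _ := by rw [← Real.exp_nat_mul]; push_cast; ring_nf
  have hbpow : (b : ℝ) ^ L ≤ Real.exp (Γ * L) := by
    calc (b : ℝ) ^ L ≤ Real.exp Γ ^ L := by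
          gcongr
          exact (Real.log_le_iff_le_exp (by positivity)).1 hbΓ
      _ = _ := by rw [← Real.exp_nat_mul]; ring_nf
  have htwo : (2 : ℝ) ^ (10 * (4 * n * N)) ≤ Real.exp (28 * (n * N)) := by
    rw [← Real.log_le_iff_le_exp (by positivity), Real.log_pow]
    push_cast
    linarith [mul_le_mul_of_nonneg_left Real.log_two_lt_d9.le (by positivity : 0 ≤ (n : ℝ) * N),
      (by positivity : 0 ≤ (n : ℝ) * N)]
  have hVpow : |(a : ℝ) / b - 1| ^ (n * L) ≤ Real.exp (-(lam * (n * L))) := by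
    calc |(a : ℝ) / b - 1| ^ (n * L) ≤ Real.exp (-lam) ^ (n * L) := by gcongr
      _ = _ := by rw [← Real.exp_nat_mul]; push_cast; ring_nf
  calc (1 : ℝ) ≤ (d : ℝ) ^ (4 * n) * (b : ℝ) ^ L *
        (2 ^ (10 * (4 * n * N)) * (|(a : ℝ) / b - 1| ^ (n * L) + |τ|)) :=
        one_le_of_rational_approximation hn hL hLN ha hb hc hd hcd
          (hV.trans (Real.exp_le_one_iff.2 (by linarith)))
          (hτ.trans (Real.exp_le_one_iff.2 (by linarith))) hη
    _ ≤ Real.exp (4 * C * (n * N)) * Real.exp (Γ * L) * (Real.exp (28 * (n * N)) *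
        (Real.exp (-(lam * (n * L))) + Real.exp (-σ))) := by gcongr
    _ = _ := by
      simp only [mul_add, ← Real.exp_add]
      ring_nf

theorem abs_sub_one_le_abs_pow_sub_one {R : Type*} [CommRing R] [LinearOrder R]
    [IsStrictOrderedRing R] {y : R} (hy : 0 ≤ y) {N : ℕ} (hN : N ≠ 0) : |y - 1| ≤ |y ^ N - 1| := by
  rcases le_total y 1 with h | h
  · have := pow_le_of_le_one hy h hN
    rw [abs_of_nonpos (by linarith), abs_of_nonpos (by linarith)]
    linarith
  · have := le_self_pow₀ h hN
    rw [abs_of_nonneg (by linarith), abs_of_nonneg (by linarith)]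
    linarith

theorem exp_neg_le_abs_div_sub_one {a b : ℕ} (hb : b ≠ 0) (hab : a ≠ b) {Γ : ℝ}
    (hΓ : Real.log b ≤ Γ) : Real.exp (-Γ) ≤ |(a : ℝ) / b - 1| := by
  have hb' : (0 : ℝ) < b := by positivity
  have hone : (1 : ℝ) ≤ |(a : ℝ) - b| := by
    exact_mod_cast Int.one_le_abs (by omega : (a : ℤ) - b ≠ 0)
  rw [div_sub_one hb'.ne', abs_div, abs_of_pos hb', Real.exp_neg, ← one_div]
  gcongr
  exact (Real.log_le_iff_le_exp hb').1 hΓ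

theorem exp_neg_le_abs_of_pow_mul_one_add_eq_one {a b N : ℕ} (ha : a ≠ 0) (hb : b ≠ 0)
    (hab : a ≠ b) (hN : N ≠ 0) {Γ τ : ℝ} (haΓ : Real.log a ≤ Γ)
    (h : ((a : ℝ) / b) ^ N * (1 + τ) = 1) : Real.exp (-Γ) ≤ |τ| := by
  have hinv : ((b : ℝ) / a) ^ N = 1 + τ := by
    rw [← inv_div, inv_pow, inv_eq_iff_eq_inv, eq_inv_of_mul_eq_one_left h]
  calc Real.exp (-Γ) ≤ |(b : ℝ) / a - 1| := exp_neg_le_abs_div_sub_one ha hab.symm haΓ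
    _ ≤ |((b : ℝ) / a) ^ N - 1| := abs_sub_one_le_abs_pow_sub_one (by positivity) hN
    _ = |τ| := by rw [hinv, add_sub_cancel_left]

theorem exists_degrees {ε lam Γ : ℝ} {N : ℕ} (hε1 : ε ≤ 1) (hlam : 0 < lam) (hlamΓ : lam ≤ Γ)
    (hN : 8 ≤ ε * N) : ∃ n L : ℕ, n ≠ 0 ∧ L ≠ 0 ∧ L ≤ N ∧
      4 * Γ ≤ n * lam ∧ n * lam ≤ 5 * Γ ∧ ε * N / 8 ≤ L ∧ L ≤ ε * N / 4 := by
  set n := ⌈4 * Γ / lam⌉₊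
  set L := ⌊ε * N / 4⌋₊
  have hΓn : 4 * Γ ≤ n * lam := (div_le_iff₀ hlam).1 (Nat.le_ceil _)
  have hnΓ : n * lam < 4 * Γ + lam := by
    rw [← lt_div_iff₀ hlam, ← div_add_one hlam.ne']
    exact Nat.ceil_lt_add_one (div_nonneg (by linarith) hlam.le)
  have hLε : L ≤ ε * N / 4 := Nat.floor_le (by linarith)
  have hεL : ε * N / 4 < L + 1 := Nat.lt_floor_add_one _
  have hεN : ε * N ≤ N := mul_le_of_le_one_left N.cast_nonneg hε1
  refine ⟨n, L, fun hn => ?_, fun hL => ?_, ?_, hΓn, by linarith, by linarith, hLε⟩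
  · rw [hn, Nat.cast_zero] at hΓn
    linarith
  · rw [hL, Nat.cast_zero] at hεL
    linarith
  · exact_mod_cast (by linarith : (L : ℝ) ≤ N)

/-- The degrees are balanced so that `n L lam` exceeds both the contribution `Γ L` of the
denominator `b` and the contribution `C n N` of the denominator `d`. -/
theorem exp_neg_lt_of_rational_approximation {C ε lam Γ τ : ℝ} {N a b c d : ℕ} (hC : 0 ≤ C)
    (hε : 0 < ε) (hε1 : ε ≤ 1) (hlam : 128 * (C + 9) ≤ ε * lam) (hN : 8 ≤ ε * N)
    (ha : a ≠ 0) (hb : b ≠ 0) (hc : c ≠ 0) (hd : d ≠ 0) (hab : a ≠ b)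
    (haΓ : Real.log a ≤ Γ) (hbΓ : Real.log b ≤ Γ) (hdC : Real.log d ≤ C * N)
    (hV : |(a : ℝ) / b - 1| ≤ Real.exp (-lam))
    (hη : (c : ℝ) / d = ((a : ℝ) / b) ^ N * (1 + τ)) :
    Real.exp (-(ε * N * Γ)) < |τ| := by
  by_contra! hτ
  have hlam1 : 1 ≤ lam := by nlinarith
  have hlamΓ : lam ≤ Γ := neg_le_neg_iff.1 <|
    Real.exp_le_exp.1 ((exp_neg_le_abs_div_sub_one hb hab hbΓ).trans hV)
  have hΓ0 : 0 ≤ Γ := by linarith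
  have hεNΓ : 8 * Γ ≤ ε * N * Γ := by gcongr
  have hN0 : N ≠ 0 := by
    rintro rfl
    norm_num at hN
  have hcd : c ≠ d := by
    rintro rfl
    rw [div_self (by positivity)] at hη
    have := Real.exp_le_exp.1 <|
      (exp_neg_le_abs_of_pow_mul_one_add_eq_one ha hb hab hN0 haΓ hη.symm).trans hτ
    linarith
  obtain ⟨n, L, hn, hL, hLN, hΓn, hnΓ, hεL, hLε⟩ :=
    exists_degrees hε1 (by linarith : 0 < lam) hlamΓ hN
  have hbound := one_le_exp_of_rational_approximation hn hL hLN ha hb hc hd hcd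
    (by linarith : 0 ≤ lam) (by linarith : 0 ≤ ε * N * Γ) hbΓ hdC hV hτ hη
  have hnN : (1 : ℝ) ≤ n * N := by exact_mod_cast Nat.one_le_iff_ne_zero.2 (mul_ne_zero hn hN0)
  have hCnN : 128 * (C + 9) * (n * N) ≤ ε * lam * (n * N) := by gcongr
  have hfirst : 4 * (C + 7) * (n * N) + Γ * L - lam * (n * L) ≤ -1 := by
    have hΓL : 4 * Γ * L ≤ n * lam * L := by gcongr
    have hεL' : ε * N / 8 * (n * lam) ≤ L * (n * lam) := by gcongr
    have h0 : 0 ≤ n * lam * L := by positivity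
    linarith
  have hsecond : 4 * (C + 7) * (n * N) + Γ * L - ε * N * Γ ≤ -1 := by
    have hnΓ' : ε * N * (n * lam) ≤ ε * N * (5 * Γ) := mul_le_mul_of_nonneg_left hnΓ (by positivity)
    have hLΓ : L * Γ ≤ ε * N / 4 * Γ := by gcongr
    linarith
  linarith [Real.exp_le_exp.2 hfirst, Real.exp_le_exp.2 hsecond, Real.exp_neg_one_lt_d9]

end RationalApproximation

section SimultaneousApproximation

theorem exists_lt_le_abs_sub_le {φ : ℕ → ℝ} {a b : ℝ} {K : ℕ} (hK : K ≠ 0)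
    (hφ : ∀ i ≤ K, φ i ∈ Set.Ico a b) :
    ∃ i j, i < j ∧ j ≤ K ∧ |φ j - φ i| ≤ (b - a) / K := by
  have hK0 : (0 : ℝ) < K := by positivity
  have hba : 0 < b - a := by linarith [(hφ 0 K.zero_le).1, (hφ 0 K.zero_le).2]
  set box : ℕ → ℤ := fun i => ⌊(φ i - a) * (K / (b - a))⌋
  have hmaps : ∀ i ∈ Finset.range (K + 1), box i ∈ Finset.Ico (0 : ℤ) K := fun i hi => by
    obtain ⟨ha, hb⟩ := hφ i (Nat.lt_succ_iff.1 (Finset.mem_range.1 hi))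
    rw [Finset.mem_Ico, Int.floor_lt, Int.cast_natCast, mul_div_assoc', div_lt_iff₀ hba, mul_comm]
    exact ⟨Int.floor_nonneg.2 (mul_nonneg (sub_nonneg.2 ha) (by positivity)),
      mul_lt_mul_of_pos_left (by linarith) hK0⟩
  have hclose : ∀ i j, box i = box j → |φ j - φ i| ≤ (b - a) / K := by
    intro i j hij
    have hlt := Int.abs_sub_lt_one_of_floor_eq_floor hij.symm
    rw [← sub_mul, sub_sub_sub_cancel_right, abs_mul, abs_of_pos (div_pos hK0 hba),
      ← lt_div_iff₀ (by positivity), one_div_div] at hlt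
    exact hlt.le
  obtain ⟨i, hi, j, hj, hne, hij⟩ :=
    Finset.exists_ne_map_eq_of_card_lt_of_maps_to (by simp) hmaps
  rw [Finset.mem_range, Nat.lt_succ_iff] at hi hj
  rcases lt_or_gt_of_ne hne with h | h
  · exact ⟨i, j, h, hj, hclose i j hij⟩
  · exact ⟨j, i, h, hi, hclose j i hij.symm⟩

theorem abs_floor_sub_floor_sub_lt_one (x y : ℝ) : |((⌊x⌋ - ⌊y⌋ : ℤ) : ℝ) - (x - y)| < 1 := by
  rw [abs_lt]
  push_cast
  constructor <;>
    linarith [Int.floor_le x, Int.lt_floor_add_one x, Int.floor_le y, Int.lt_floor_add_one y]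

theorem abs_sub_mul_le_of_abs_sub_mul_div_le {x c B N T : ℝ} (hT : 0 ≤ T) (hN : 0 ≤ N)
    (hB : 0 < B) (hNT : N * T ≤ B) (hBT : B ≤ (N + 1) * T) (hx : |x| ≤ 4 * B)
    (hc : |c - T * (x / B)| ≤ 1) : |x - N * c| ≤ 4 * T + N := by
  have hsplit : x - N * c = (B - N * T) * (x / B) - N * (c - T * (x / B)) := by
    field_simp
    ring
  have hxB : |x / B| ≤ 4 := by rwa [abs_div, abs_of_pos hB, div_le_iff₀ hB]
  calc |x - N * c| ≤ |(B - N * T) * (x / B)| + |N * (c - T * (x / B))| := hsplit ▸ abs_sub _ _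
    _ = (B - N * T) * |x / B| + N * |c - T * (x / B)| := by
      rw [abs_mul, abs_mul, abs_of_nonneg (sub_nonneg.2 hNT), abs_of_nonneg hN]
    _ ≤ T * 4 + N * 1 := by
      gcongr
      linarith
    _ = 4 * T + N := by ring

variable {ι : Type*} (S : Finset ι) (w : ι → ℝ)

theorem abs_sum_floor_mul_sub_le (x : ι → ℝ) :
    |∑ p ∈ S, (⌊x p⌋ : ℝ) * w p - ∑ p ∈ S, x p * w p| ≤ ∑ p ∈ S, |w p| := by
  rw [← Finset.sum_sub_distrib]
  refine (Finset.abs_sum_le_sum_abs _ _).trans (Finset.sum_le_sum fun p _ => ?_)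
  rw [← sub_mul, abs_mul, abs_sub_comm]
  refine mul_le_of_le_one_left (abs_nonneg _) ?_
  rw [Int.self_sub_floor, Int.abs_fract]
  exact (Int.fract_lt_one _).le

theorem sum_floor_mul_mem_Ico {n U : ℕ} (hn : n ≤ U) {β : ι → ℝ}
    (hβ : |U * ∑ p ∈ S, β p * w p| < 1) :
    ∑ p ∈ S, (⌊n * β p⌋ : ℝ) * w p ∈ Set.Ico (-(∑ p ∈ S, |w p| + 1)) (∑ p ∈ S, |w p| + 1) := by
  have hfloor := abs_sum_floor_mul_sub_le S w fun p => n * β p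
  have hsum : |∑ p ∈ S, n * β p * w p| < 1 := by
    refine lt_of_le_of_lt ?_ hβ
    simp only [mul_assoc, ← Finset.mul_sum]
    rw [abs_mul, abs_mul, Nat.abs_cast, Nat.abs_cast]
    gcongr
  rw [abs_le] at hfloor
  rw [abs_lt] at hsum
  exact ⟨by linarith [hfloor.1, hsum.1], by linarith [hfloor.2, hsum.2]⟩

/-- The Dirichlet pigeonhole is applied to the multiples `i * R * β` with `i ≤ K`: a step `R`
that is large compared with `1 / ε` prevents `c p` from vanishing where `β p` is not small. -/
theorem exists_bounded_integral_approx {ε κ : ℝ} (hε : 0 < ε) (hκ : 0 < κ) :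
    ∃ U : ℕ, 0 < U ∧ ∀ β : ι → ℝ, |U * ∑ p ∈ S, β p * w p| < 1 →
      ∃ T : ℕ, 0 < T ∧ T ≤ U ∧ ∃ c : ι → ℤ, (∀ p, |c p - T * β p| < 1) ∧
        |∑ p ∈ S, c p * w p| ≤ κ ∧ ∀ p, ε ≤ |β p| → c p ≠ 0 := by
  set Λ := ∑ p ∈ S, |w p|
  have : 0 ≤ Λ := Finset.sum_nonneg fun p _ => abs_nonneg _
  obtain ⟨K, hK⟩ := exists_nat_ge (2 * (Λ + 1) / κ)
  obtain ⟨R, hR⟩ := exists_nat_ge (1 / ε)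
  have hK0 : 0 < K := Nat.cast_pos.1 (lt_of_lt_of_le (by positivity) hK)
  have hR0 : 0 < R := Nat.cast_pos.1 (lt_of_lt_of_le (by positivity) hR)
  refine ⟨K * R, Nat.mul_pos hK0 hR0, fun β hβ => ?_⟩
  have hφ (i) (hi : i ≤ K) :
      ∑ p ∈ S, (⌊(i * R) * β p⌋ : ℝ) * w p ∈ Set.Ico (-(Λ + 1)) (Λ + 1) := by
    simpa using sum_floor_mul_mem_Ico S w (Nat.mul_le_mul_right R hi) hβ
  obtain ⟨i, j, hij, hjK, hclose⟩ := exists_lt_le_abs_sub_le hK0.ne' hφ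
  have hT0 : 0 < j - i := Nat.sub_pos_of_lt hij
  have happrox : ∀ p, |((⌊(j * R) * β p⌋ - ⌊(i * R) * β p⌋ : ℤ) : ℝ) -
      ((j - i) * R : ℕ) * β p| < 1 := fun p => by
    convert abs_floor_sub_floor_sub_lt_one ((j * R) * β p) ((i * R) * β p) using 3
    push_cast [Nat.cast_sub hij.le]
    ring
  refine ⟨(j - i) * R, Nat.mul_pos hT0 hR0, Nat.mul_le_mul_right _ (by lia), _, happrox, ?_,
    fun p hp hcp => ?_⟩
  · have hwidth : (Λ + 1 - -(Λ + 1)) / K ≤ κ := by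
      rw [div_le_iff₀ hκ] at hK
      rw [div_le_iff₀ (by positivity)]
      linarith
    refine le_trans (le_of_eq ?_) (hclose.trans hwidth)
    rw [← Finset.sum_sub_distrib]
    simp only [Int.cast_sub, sub_mul]
  · have hlarge : 1 ≤ |((j - i) * R : ℕ) * β p| := by
      rw [div_le_iff₀ hε] at hR
      rw [abs_mul, Nat.abs_cast]
      have : (R : ℝ) ≤ ((j - i) * R : ℕ) := by exact_mod_cast Nat.le_mul_of_pos_left R hT0
      exact hR.trans (by gcongr)
    have := happrox p
    rw [hcp, Int.cast_zero, zero_sub, abs_neg] at this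
    linarith

theorem exists_integral_decomposition {ε κ : ℝ} (hε : 0 < ε) (hκ : 0 < κ) :
    ∃ U : ℕ, 0 < U ∧ ∀ (x : ι → ℝ) (B : ℝ), U * (4 * U + 1) ≤ B →
      |U * ∑ p ∈ S, x p * w p| < B → (∀ p, |x p| ≤ 4 * B) →
      ∃ (N T : ℕ) (c : ι → ℤ), N * T ≤ B ∧ B < U * (N + 1) ∧ (∀ p, |(c p : ℝ)| ≤ 5 * T) ∧
        (∀ p, |x p - N * c p| ≤ 2 * N) ∧ |∑ p ∈ S, c p * w p| ≤ κ ∧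
        ∀ p, ε * B ≤ |x p| → c p ≠ 0 := by
  obtain ⟨U, hU, happrox⟩ := exists_bounded_integral_approx S w hε hκ
  refine ⟨U, hU, fun x B hB hsum hx => ?_⟩
  have hU1 : (1 : ℝ) ≤ U := by exact_mod_cast hU
  have hB0 : 0 < B := lt_of_lt_of_le (by positivity) hB
  obtain ⟨T, hT0, hTU, c, hc, hcsum, hcne⟩ := happrox (fun p => x p / B) (by
    simp only [div_mul_eq_mul_div]
    rwa [← Finset.sum_div, mul_div_assoc', abs_div, abs_of_pos hB0, div_lt_one hB0])
  have hT1 : (1 : ℝ) ≤ T := by exact_mod_cast hT0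
  have hTU' : (T : ℝ) ≤ U := by exact_mod_cast hTU
  set N := ⌊B / T⌋₊
  have hNT : N * T ≤ B := (le_div_iff₀ (by linarith)).1 (Nat.floor_le (by positivity))
  have hBT : B < (N + 1) * T := (div_lt_iff₀ (by linarith)).1 (Nat.lt_floor_add_one _)
  have hBU : B < U * (N + 1) :=
    hBT.trans_le (by rw [mul_comm]; gcongr)
  have hTN : 4 * T ≤ (N : ℝ) := by
    have := lt_of_mul_lt_mul_left (hB.trans_lt hBU) (by linarith)
    linarith
  refine ⟨N, T, c, hNT, hBU, fun p => ?_, fun p => ?_, hcsum, fun p hp => hcne p ?_⟩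
  · have hTx : |T * (x p / B)| ≤ T * 4 := by
      rw [abs_mul, Nat.abs_cast, abs_div, abs_of_pos hB0]
      gcongr
      exact (div_le_iff₀ hB0).2 (hx p)
    have := abs_sub_abs_le_abs_sub (c p : ℝ) (T * (x p / B))
    linarith [hc p]
  · have := abs_sub_mul_le_of_abs_sub_mul_div_le (by linarith) (Nat.cast_nonneg _) hB0 hNT hBT.le
      (hx p) (hc p).le
    linarith
  · rwa [abs_div, abs_of_pos hB0, le_div_iff₀ hB0]

end SimultaneousApproximation

section SmoothNumbers

/-- The numerator of the rational number `∏ p ∈ S, p ^ c p`; its denominator is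
`primePowProd S (-c)`. -/
def primePowProd (S : Finset ℕ) (c : ℕ → ℤ) : ℕ := ∏ p ∈ S, p ^ (c p).toNat

variable {S : Finset ℕ}

section PrimePowProd

theorem primePowProd_ne_zero (hS : 0 ∉ S) (c : ℕ → ℤ) : primePowProd S c ≠ 0 :=
  Finset.prod_ne_zero_iff.2 fun _ hp => pow_ne_zero _ (ne_of_mem_of_not_mem hp hS)

theorem log_primePowProd (hS : 0 ∉ S) (c : ℕ → ℤ) :
    Real.log (primePowProd S c) = ∑ p ∈ S, ((c p).toNat : ℝ) * Real.log p := by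
  rw [primePowProd, Nat.cast_prod, Real.log_prod fun p hp =>
    Nat.cast_ne_zero.2 (pow_ne_zero _ (ne_of_mem_of_not_mem hp hS))]
  simp only [Nat.cast_pow, Real.log_pow]

theorem log_primePowProd_le (hS : 0 ∉ S) {c : ℕ → ℤ} {M : ℝ} (hc : ∀ p ∈ S, |(c p : ℝ)| ≤ M) :
    Real.log (primePowProd S c) ≤ M * ∑ p ∈ S, Real.log p := by
  rw [log_primePowProd hS, Finset.mul_sum]
  refine Finset.sum_le_sum fun p hp => mul_le_mul_of_nonneg_right ?_ (Real.log_natCast_nonneg p)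
  refine le_trans ?_ (hc p hp)
  exact_mod_cast (Int.toNat_eq_max (c p)).trans_le (max_le (le_abs_self _) (abs_nonneg _))

theorem primePowProd_div_primePowProd_neg (hS : 0 ∉ S) (c : ℕ → ℤ) :
    (primePowProd S c : ℝ) / primePowProd S (-c) = Real.exp (∑ p ∈ S, c p * Real.log p) := by
  have hpos : ∀ c, (0 : ℝ) < primePowProd S c := fun c =>
    Nat.cast_pos.2 (Nat.pos_of_ne_zero (primePowProd_ne_zero hS c))
  rw [← Real.exp_log (div_pos (hpos c) (hpos (-c))), Real.log_div (hpos c).ne' (hpos (-c)).ne',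
    log_primePowProd hS, log_primePowProd hS, ← Finset.sum_sub_distrib]
  congr 1
  refine Finset.sum_congr rfl fun p _ => ?_
  rw [← sub_mul, Pi.neg_apply]
  congr 1
  exact_mod_cast Int.toNat_sub_toNat_neg (c p)

theorem dvd_primePowProd_iff (hS : ∀ p ∈ S, p.Prime) {c : ℕ → ℤ} {p : ℕ} (hp : p ∈ S) :
    p ∣ primePowProd S c ↔ 0 < c p := by
  refine ⟨fun h => ?_, fun h => (dvd_pow_self p (by lia)).trans (Finset.dvd_prod_of_mem _ hp)⟩
  obtain ⟨r, hr, hpr⟩ := ((hS p hp).prime.dvd_finsetProd_iff _).1 h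
  obtain rfl : p = r :=
    (Nat.prime_dvd_prime_iff_eq (hS p hp) (hS r hr)).1 ((hS p hp).dvd_of_dvd_pow hpr)
  by_contra! hc
  rw [Int.toNat_of_nonpos hc, pow_zero] at hpr
  exact (hS p hp).not_dvd_one hpr

theorem primePowProd_ne_primePowProd_neg (hS : ∀ p ∈ S, p.Prime) {c : ℕ → ℤ} {p : ℕ} (hp : p ∈ S)
    (hc : c p ≠ 0) : primePowProd S c ≠ primePowProd S (-c) := by
  intro h
  have hpos := dvd_primePowProd_iff hS (c := c) hp
  rw [h, dvd_primePowProd_iff hS hp, Pi.neg_apply] at hpos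
  lia

end PrimePowProd

section Factorization

theorem log_eq_sum_factorization {X : ℕ} (hX : X ∈ Nat.factoredNumbers S) :
    Real.log X = ∑ p ∈ S, X.factorization p * Real.log p := by
  rw [Real.log_nat_eq_sum_factorization, Finsupp.sum_of_support_subset _
    (Nat.primeFactors_subset_of_mem_factoredNumbers hX) _ (by simp)]

theorem factorization_le_log_two (X p : ℕ) : X.factorization p ≤ Nat.log 2 X := by
  rcases eq_or_ne X 0 with rfl | hX
  · simp
  by_cases hp : p.Prime
  · exact Nat.le_log_of_pow_le one_lt_two
      ((Nat.pow_le_pow_left hp.two_le _).trans (Nat.ordProj_le p hX))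
  · simp [Nat.factorization_eq_zero_of_not_prime _ hp]

theorem natLog_two_le_two_mul_log (X : ℕ) : (Nat.log 2 X : ℝ) ≤ 2 * Real.log X := by
  refine (Real.natLog_le_logb X 2).trans ?_
  rw [Real.logb, div_le_iff₀ (by positivity)]
  have := Real.log_two_gt_d9
  push_cast
  nlinarith [Real.log_natCast_nonneg X]

theorem card_le_of_mem_factoredNumbers {A : Finset ℕ} {y : ℕ}
    (hA : ∀ n ∈ A, n ∈ Nat.factoredNumbers S) (hAy : ∀ n ∈ A, n ≤ y) :
    A.card ≤ (Nat.log 2 y + 1) ^ S.card := by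
  have hcard : A.card ≤
      (Fintype.piFinset fun _ : S => Finset.range (Nat.log 2 y + 1)).card := by
    refine Finset.card_le_card_of_injOn (fun n p => n.factorization p) (fun n hn => ?_)
      fun m hm n hn hmn => ?_
    · refine Finset.mem_coe.2 (Fintype.mem_piFinset.2 fun p => Finset.mem_range.2 ?_)
      exact Nat.lt_succ_of_le
        ((factorization_le_log_two n p).trans (Nat.log_mono_right (hAy n hn)))
    · have hzero : ∀ n ∈ A, ∀ p ∉ S, n.factorization p = 0 := fun n hn p hp =>
        Finsupp.notMem_support_iff.1 fun h =>
          hp (Nat.primeFactors_subset_of_mem_factoredNumbers (hA n hn) h)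
      refine Nat.eq_of_factorization_eq (Nat.ne_zero_of_mem_factoredNumbers (hA m hm))
        (Nat.ne_zero_of_mem_factoredNumbers (hA n hn)) fun p => ?_
      by_cases hp : p ∈ S
      · exact congrFun hmn ⟨p, hp⟩
      · rw [hzero m hm p hp, hzero n hn p hp]
  simpa using hcard

end Factorization

section SmoothRatios

theorem exists_lt_abs_exponent (hS : 0 ∉ S) {e : ℕ → ℤ} {s t : ℕ} (hs : s ≠ 0) {M Γ τ : ℝ}
    (hsΓ : Real.log s + M * ∑ p ∈ S, Real.log p ≤ Γ) (hτ0 : τ ≠ 0) (hτ : |τ| < Real.exp (-Γ))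
    (hτexp : 1 + τ = t / s * Real.exp (∑ p ∈ S, e p * Real.log p)) :
    ∃ p ∈ S, M < |(e p : ℝ)| := by
  by_contra! hcon
  have hden : s * primePowProd S (-e) ≠ 0 := mul_ne_zero hs (primePowProd_ne_zero hS _)
  have hquot : ((t * primePowProd S e : ℕ) : ℝ) / (s * primePowProd S (-e) : ℕ) = 1 + τ := by
    rw [hτexp, ← primePowProd_div_primePowProd_neg hS, div_mul_div_comm]
    push_cast
    rfl
  have hne : t * primePowProd S e ≠ s * primePowProd S (-e) := by
    intro h
    rw [h, div_self (Nat.cast_ne_zero.2 hden)] at hquot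
    exact hτ0 (by linarith)
  have hlog : Real.log (s * primePowProd S (-e) : ℕ) ≤ Γ := by
    rw [Nat.cast_mul, Real.log_mul (Nat.cast_ne_zero.2 hs)
      (Nat.cast_ne_zero.2 (primePowProd_ne_zero hS _))]
    have := log_primePowProd_le hS (c := -e) (M := M) (by simpa using hcon)
    linarith
  have hlower := exp_neg_le_abs_div_sub_one hden hne hlog
  rw [hquot, add_sub_cancel_left] at hlower
  exact hτ.not_ge hlower

theorem abs_primePowProd_div_sub_one_le (hS : 0 ∉ S) {c : ℕ → ℤ} {lam : ℝ} (hlam : 0 ≤ lam)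
    (hsum : |∑ p ∈ S, c p * Real.log p| ≤ Real.exp (-lam) / 2) :
    |(primePowProd S c : ℝ) / primePowProd S (-c) - 1| ≤ Real.exp (-lam) := by
  have hexp : Real.exp (-lam) ≤ 1 := Real.exp_le_one_iff.2 (by linarith)
  rw [primePowProd_div_primePowProd_neg hS]
  refine (Real.abs_exp_sub_one_le ?_).trans ?_ <;> linarith

theorem exp_neg_lt_of_exponent_decomposition (hS : ∀ p ∈ S, p.Prime) {e c : ℕ → ℤ} {s t N : ℕ}
    (hs : s ≠ 0) (ht : t ≠ 0) {ε lam M τ : ℝ} (hε : 0 < ε) (hε1 : ε ≤ 1)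
    (hlam : 128 * (10 + 2 * ∑ p ∈ S, Real.log p) ≤ ε * lam) (hN : 8 ≤ ε * N)
    (hsN : Real.log s ≤ N) (hc : ∀ p, |(c p : ℝ)| ≤ M) (hr : ∀ p, |(e p : ℝ) - N * c p| ≤ 2 * N)
    {p₀ : ℕ} (hp₀ : p₀ ∈ S) (hcp₀ : c p₀ ≠ 0)
    (hsum : |∑ p ∈ S, c p * Real.log p| ≤ Real.exp (-lam) / 2)
    (hτexp : 1 + τ = t / s * Real.exp (∑ p ∈ S, e p * Real.log p)) :
    Real.exp (-(ε * N * (M * ∑ p ∈ S, Real.log p))) < |τ| := by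
  have hS0 : 0 ∉ S := fun h => Nat.not_prime_zero (hS 0 h)
  have hΛ : 0 ≤ ∑ p ∈ S, Real.log p := Finset.sum_nonneg fun p _ => Real.log_natCast_nonneg p
  have hlam0 : 0 ≤ lam := (mul_nonneg_iff_of_pos_left hε).1 (by linarith)
  set r : ℕ → ℤ := fun p => e p - N * c p with hrdef
  have hrbound : ∀ p, |(r p : ℝ)| ≤ 2 * N := fun p => by
    rw [hrdef]
    push_cast
    exact hr p
  have hrlog := log_primePowProd_le hS0 (c := -r) (M := 2 * N) (by simpa using fun p _ => hrbound p)
  have hV := primePowProd_div_primePowProd_neg hS0 (-c)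
  have hclose := abs_primePowProd_div_sub_one_le hS0 (c := -c) hlam0 (by simpa using hsum)
  have hne := primePowProd_ne_primePowProd_neg hS hp₀ hcp₀
  rw [neg_neg] at hV hclose
  refine exp_neg_lt_of_rational_approximation (C := 1 + 2 * ∑ p ∈ S, Real.log p) (lam := lam)
    (a := primePowProd S (-c)) (b := primePowProd S c)
    (c := t * primePowProd S r) (d := s * primePowProd S (-r)) (by linarith) hε hε1
    (by linarith) hN (primePowProd_ne_zero hS0 _) (primePowProd_ne_zero hS0 _)
    (mul_ne_zero ht (primePowProd_ne_zero hS0 _)) (mul_ne_zero hs (primePowProd_ne_zero hS0 _))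
    hne.symm (log_primePowProd_le hS0 (by simpa using fun p _ => hc p))
    (log_primePowProd_le hS0 fun p _ => hc p) ?_ hclose ?_
  · rw [Nat.cast_mul, Real.log_mul (Nat.cast_ne_zero.2 hs)
      (Nat.cast_ne_zero.2 (primePowProd_ne_zero hS0 _))]
    linarith
  · have hsum : ∑ p ∈ S, (r p : ℝ) * Real.log p =
        N * ∑ p ∈ S, ((-c) p : ℤ) * Real.log p + ∑ p ∈ S, e p * Real.log p := by
      rw [Finset.mul_sum, ← Finset.sum_add_distrib]
      refine Finset.sum_congr rfl fun p _ => ?_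
      rw [hrdef, Pi.neg_apply]
      push_cast
      ring
    rw [hτexp, hV, ← Real.exp_nat_mul, mul_left_comm, ← Real.exp_add, ← hsum,
      ← primePowProd_div_primePowProd_neg hS0, div_mul_div_comm]
    push_cast
    rfl

theorem exists_exp_neg_lt_of_large_exponent (hS : ∀ p ∈ S, p.Prime) {ε : ℝ} (hε : 0 < ε)
    (hε1 : ε ≤ 1) :
    ∃ U : ℕ, 0 < U ∧ ∀ (e : ℕ → ℤ) (s t : ℕ) (B τ : ℝ), s ≠ 0 → t ≠ 0 →
      U * (8 / ε + 4 * U + 1) ≤ B → Real.log s * (2 * U) ≤ B → (∀ p, |(e p : ℝ)| ≤ 4 * B) →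
      |U * ∑ p ∈ S, e p * Real.log p| < B → (∃ p ∈ S, ε * B ≤ |(e p : ℝ)|) →
      1 + τ = t / s * Real.exp (∑ p ∈ S, e p * Real.log p) →
      Real.exp (-(5 * ε * (∑ p ∈ S, Real.log p) * B)) < |τ| := by
  set Λ := ∑ p ∈ S, Real.log p
  have : 0 ≤ Λ := Finset.sum_nonneg fun p _ => Real.log_natCast_nonneg p
  obtain ⟨lam, hlam⟩ : ∃ lam, 128 * (10 + 2 * Λ) ≤ ε * lam :=
    ⟨128 * (10 + 2 * Λ) / ε, by rw [mul_div_cancel₀ _ hε.ne']⟩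
  obtain ⟨U, hU, hdecomp⟩ := exists_integral_decomposition S (fun p => Real.log p) hε
    (by positivity : 0 < Real.exp (-lam) / 2)
  refine ⟨U, hU, fun e s t B τ hs ht hB hsB heB hsum ⟨p₀, hp₀, hep₀⟩ hτexp => ?_⟩
  have hU1 : (1 : ℝ) ≤ U := by exact_mod_cast hU
  have h8ε : 0 < 8 / ε := by positivity
  obtain ⟨N, T, c, hNT, hBN, hc, hr, hcsum, hcne⟩ := hdecomp (fun p => e p) B
    (le_trans (by gcongr; linarith) hB) hsum heB
  have hN : 8 / ε + 4 * U < N := by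
    linarith [lt_of_mul_lt_mul_left (hB.trans_lt hBN) (by linarith)]
  have hsN : Real.log s ≤ N := by
    have : U * (2 * Real.log s) < U * (N + 1) := by linarith
    linarith [lt_of_mul_lt_mul_left this (by linarith)]
  have hεN : 8 ≤ ε * N := by
    rw [mul_comm, ← div_le_iff₀ hε]
    linarith
  refine lt_of_le_of_lt (Real.exp_le_exp.2 (neg_le_neg ?_))
    (exp_neg_lt_of_exponent_decomposition hS hs ht hε hε1 hlam hεN hsN hc hr hp₀ (hcne p₀ hep₀)
      hcsum hτexp)
  calc ε * N * (5 * T * Λ) = 5 * ε * Λ * (N * T) := by ring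
    _ ≤ 5 * ε * Λ * B := by gcongr

theorem sum_factorization_sub_mul_log {X Y : ℕ} (hX : X ∈ Nat.factoredNumbers S)
    (hY : Y ∈ Nat.factoredNumbers S) :
    ∑ p ∈ S, ((Y.factorization p - X.factorization p : ℤ) : ℝ) * Real.log p =
      Real.log Y - Real.log X := by
  rw [log_eq_sum_factorization hX, log_eq_sum_factorization hY, ← Finset.sum_sub_distrib]
  exact Finset.sum_congr rfl fun p _ => by push_cast; ring

theorem mul_div_mul_eq_div_mul_exp_sum {X Y : ℕ} (hX : X ∈ Nat.factoredNumbers S)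
    (hY : Y ∈ Nat.factoredNumbers S) (s t : ℝ) :
    t * Y / (s * X) = t / s *
      Real.exp (∑ p ∈ S, ((Y.factorization p - X.factorization p : ℤ) : ℝ) * Real.log p) := by
  have hX0 : (X : ℝ) ≠ 0 := Nat.cast_ne_zero.2 (Nat.ne_zero_of_mem_factoredNumbers hX)
  have hY0 : (Y : ℝ) ≠ 0 := Nat.cast_ne_zero.2 (Nat.ne_zero_of_mem_factoredNumbers hY)
  rw [sum_factorization_sub_mul_log hX hY, Real.exp_sub, Real.exp_log (by positivity),
    Real.exp_log (by positivity), div_mul_div_comm]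

theorem abs_factorization_sub_le {X Y : ℕ} {B : ℝ} (hX : Real.log X ≤ B) (hY : Real.log Y ≤ B)
    (p : ℕ) : |((Y.factorization p - X.factorization p : ℤ) : ℝ)| ≤ 2 * B := by
  have hle : ∀ Z : ℕ, Real.log Z ≤ B → (Z.factorization p : ℝ) ≤ 2 * B := fun Z hZ => by
    have hcast : (Z.factorization p : ℝ) ≤ Nat.log 2 Z := by
      exact_mod_cast factorization_le_log_two Z p
    linarith [natLog_two_le_two_mul_log Z]
  push_cast
  exact abs_sub_le_of_nonneg_of_le (Nat.cast_nonneg _) (hle Y hY) (Nat.cast_nonneg _) (hle X hX)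

theorem exists_exp_neg_le_abs_mul_div_mul_sub_one (hS : ∀ p ∈ S, p.Prime) {η : ℝ} (hη : 0 < η) :
    ∃ U : ℝ, 1 ≤ U ∧ ∀ X ∈ Nat.factoredNumbers S, ∀ Y ∈ Nat.factoredNumbers S,
      ∀ s t : ℕ, s ≠ 0 → t ≠ 0 → s * X ≠ t * Y → U ≤ Real.log X → U * Real.log s ≤ Real.log X →
        U * |Real.log Y - Real.log X| ≤ Real.log X →
        Real.exp (-(Real.log s + η * Real.log X)) ≤ |(t * Y : ℝ) / (s * X) - 1| := by
  set Λ := ∑ p ∈ S, Real.log p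
  have : 0 ≤ Λ := Finset.sum_nonneg fun p _ => Real.log_natCast_nonneg p
  set ε := min 1 (η / (5 * (Λ + 1)))
  have hε : 0 < ε := lt_min one_pos (by positivity)
  have hεΛ : 5 * ε * Λ ≤ η := by
    have : ε * (5 * (Λ + 1)) ≤ η := (le_div_iff₀ (by positivity)).1 (min_le_right _ _)
    linarith
  obtain ⟨U, hU, hlarge⟩ := exists_exp_neg_lt_of_large_exponent hS hε (min_le_left _ _)
  have hU1 : (1 : ℝ) ≤ U := by exact_mod_cast hU
  have h2U : 2 * U ≤ U * (8 / ε + 4 * U + 1) := by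
    have : 0 < 8 / ε := by positivity
    nlinarith
  refine ⟨U * (8 / ε + 4 * U + 1), by linarith, fun X hX Y hY s t hs ht hne hUX hsX hYX => ?_⟩
  have hX0 : (X : ℝ) ≠ 0 := Nat.cast_ne_zero.2 (Nat.ne_zero_of_mem_factoredNumbers hX)
  have : 0 < Real.log X := by linarith
  have hYX2 : 2 * U * |Real.log Y - Real.log X| ≤ Real.log X :=
    (mul_le_mul_of_nonneg_right h2U (abs_nonneg _)).trans hYX
  have hlogY : Real.log Y ≤ 2 * Real.log X := by
    nlinarith [le_abs_self (Real.log Y - Real.log X), abs_nonneg (Real.log Y - Real.log X)]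
  have hτexp := (add_sub_cancel 1 ((t * Y : ℝ) / (s * X))).trans
    (mul_div_mul_eq_div_mul_exp_sum hX hY s t)
  by_contra! hτ
  obtain ⟨p₀, hp₀, hlt⟩ := exists_lt_abs_exponent (M := ε * Real.log X)
    (fun h => Nat.not_prime_zero (hS 0 h)) hs (by nlinarith) (by
      rw [sub_ne_zero, Ne, div_eq_one_iff_eq (by positivity)]
      exact_mod_cast hne.symm) hτ hτexp
  refine (hτ.trans_le (Real.exp_le_exp.2 (neg_le_neg ?_))).not_gt (hlarge _ s t _ _ hs ht hUX ?_
    (fun p => (abs_factorization_sub_le (by linarith) hlogY p).trans_eq (by ring)) ?_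
    ⟨p₀, hp₀, hlt.le⟩ hτexp)
  · nlinarith [Real.log_natCast_nonneg s]
  · nlinarith [Real.log_natCast_nonneg s]
  · rw [sum_factorization_sub_mul_log hX hY, abs_mul, Nat.abs_cast]
    linarith

theorem abs_div_sub_one_lt_rpow {a b x α : ℝ} (hx : 0 < x) (hxa : x ≤ a) (h : |a - b| < x ^ α) :
    |b / a - 1| < x ^ (α - 1) := by
  have ha : 0 < a := hx.trans_le hxa
  rw [div_sub_one ha.ne', abs_div, abs_of_pos ha, abs_sub_comm, div_lt_iff₀ ha]
  calc |a - b| < x ^ (α - 1) * x := by rwa [Real.rpow_sub_one hx.ne', div_mul_cancel₀ _ hx.ne']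
    _ ≤ x ^ (α - 1) * a := by gcongr

theorem log_sub_log_le_of_abs_sub_le {s t X Y : ℕ} (hs : s ≠ 0) (ht : t ≠ 0) (hX : X ≠ 0)
    (hY : Y ≠ 0) (h : |(s : ℝ) * X - t * Y| ≤ X) :
    Real.log Y - Real.log X ≤ Real.log s + 1 := by
  have hs1 : (1 : ℝ) ≤ s := by exact_mod_cast Nat.one_le_iff_ne_zero.2 hs
  have ht1 : (1 : ℝ) ≤ t := by exact_mod_cast Nat.one_le_iff_ne_zero.2 ht
  have hYle : (Y : ℝ) ≤ 2 * s * X := by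
    have htY : (Y : ℝ) ≤ t * Y := le_mul_of_one_le_left (Nat.cast_nonneg _) ht1
    have hsX : (X : ℝ) ≤ s * X := le_mul_of_one_le_left (Nat.cast_nonneg _) hs1
    linarith [(abs_le.1 h).1]
  have hlog := Real.log_le_log (by positivity) hYle
  rw [Real.log_mul (by positivity) (by positivity), Real.log_mul two_ne_zero (by positivity)]
    at hlog
  linarith [Real.log_two_lt_d9]

theorem exists_log_lt_mul_log_of_abs_sub_lt_rpow (hS : ∀ p ∈ S, p.Prime) {α : ℝ} (hα1 : α < 1) :
    ∃ U : ℝ, 0 < U ∧ ∀ X ∈ Nat.factoredNumbers S, ∀ Y ∈ Nat.factoredNumbers S, X < Y →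
      U ≤ Real.log X → ∀ s t : ℕ, s ≠ 0 → t ≠ 0 → s * X ≠ t * Y →
        |(s : ℝ) * X - t * Y| < (X : ℝ) ^ α → Real.log X < U * Real.log s := by
  obtain ⟨U, hU, hlower⟩ :=
    exists_exp_neg_le_abs_mul_div_mul_sub_one hS (by linarith : 0 < (1 - α) / 2)
  refine ⟨max (2 * U) (4 / (1 - α)), lt_max_of_lt_left (by linarith),
    fun X hX Y hY hXY hUX s t hs ht hne hlt => ?_⟩
  have hX0 := Nat.ne_zero_of_mem_factoredNumbers hX
  have hXpos : (0 : ℝ) < X := by positivity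
  have hXs : (X : ℝ) ≤ s * X := by
    exact_mod_cast Nat.le_mul_of_pos_left X (Nat.pos_of_ne_zero hs)
  have hα : (X : ℝ) ^ α ≤ X := by
    simpa using Real.rpow_le_rpow_of_exponent_le
      (by exact_mod_cast Nat.one_le_iff_ne_zero.2 hX0 : (1 : ℝ) ≤ X) hα1.le
  by_contra! hsX
  have hlogs := Real.log_natCast_nonneg s
  have h2U : 2 * U ≤ Real.log X := (le_max_left _ _).trans hUX
  have hsU : 2 * U * Real.log s ≤ Real.log X :=
    (mul_le_mul_of_nonneg_right (le_max_left _ _) hlogs).trans hsX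
  have hsα : 4 * Real.log s ≤ Real.log X * (1 - α) := by
    have := (mul_le_mul_of_nonneg_right (le_max_right _ _) hlogs).trans hsX
    rwa [div_mul_eq_mul_div, div_le_iff₀ (by linarith)] at this
  have hYX : U * |Real.log Y - Real.log X| ≤ Real.log X := by
    have hle := log_sub_log_le_of_abs_sub_le hs ht hX0
      (Nat.ne_zero_of_mem_factoredNumbers hY) (hlt.le.trans hα)
    rw [abs_of_nonneg (sub_nonneg.2 (Real.log_le_log hXpos (by exact_mod_cast hXY.le)))]
    linarith [mul_le_mul_of_nonneg_left hle (by linarith : 0 ≤ U)]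
  have hclose := (hlower X hX Y hY s t hs ht hne (by linarith) (by linarith) hYX).trans_lt
    (abs_div_sub_one_lt_rpow hXpos hXs hlt)
  rw [Real.rpow_def_of_pos hXpos, Real.exp_lt_exp] at hclose
  have : 0 < (1 - α) * Real.log X := mul_pos (by linarith) (by linarith)
  linarith

theorem exists_rpow_lt_of_abs_sub_lt_rpow (hS : ∀ p ∈ S, p.Prime) {α : ℝ} (hα1 : α < 1) :
    ∃ δ : ℝ, 0 < δ ∧ ∀ᶠ X : ℕ in Filter.atTop, X ∈ Nat.factoredNumbers S →
      ∀ Y ∈ Nat.factoredNumbers S, X < Y → ∀ s t : ℕ, s ≠ 0 → t ≠ 0 → s * X ≠ t * Y →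
        |(s : ℝ) * X - t * Y| < (X : ℝ) ^ α → (X : ℝ) ^ δ < s := by
  obtain ⟨U, hU, hlog⟩ := exists_log_lt_mul_log_of_abs_sub_lt_rpow hS hα1
  refine ⟨1 / U, by positivity, ?_⟩
  filter_upwards [(Real.tendsto_log_atTop.comp tendsto_natCast_atTop_atTop).eventually_ge_atTop U]
    with X hUX hX Y hY hXY s t hs ht hne hlt
  have hX0 : (X : ℝ) ≠ 0 := Nat.cast_ne_zero.2 (Nat.ne_zero_of_mem_factoredNumbers hX)
  rw [← Real.log_lt_log_iff (by positivity) (by positivity), Real.log_rpow (by positivity),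
    one_div_mul_eq_div, div_lt_iff₀' hU]
  exact hlog X hX Y hY hXY hUX s t hs ht hne hlt

end SmoothRatios

section Growth

theorem eventually_natLog_two_add_one_pow_le_rpow (r : ℕ) {δ : ℝ} (hδ : 0 < δ) :
    ∀ᶠ y : ℕ in Filter.atTop, (Nat.log 2 y + 1 : ℝ) ^ r ≤ (y : ℝ) ^ δ := by
  have hlittle := (isLittleO_log_rpow_rpow_atTop (r : ℝ) hδ).bound
    (by positivity : (0 : ℝ) < 1 / 3 ^ r)
  filter_upwards [tendsto_natCast_atTop_atTop.eventually hlittle,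
    (Real.tendsto_log_atTop.comp tendsto_natCast_atTop_atTop).eventually_ge_atTop 1] with y hy hlog
  simp only [Function.comp_apply] at hlog
  rw [Real.rpow_natCast, Real.norm_of_nonneg (by positivity), Real.norm_of_nonneg (by positivity),
    one_div_mul_eq_div, le_div_iff₀ (by positivity), ← mul_pow] at hy
  refine le_trans ?_ hy
  gcongr
  linarith [natLog_two_le_two_mul_log y]

theorem tendsto_atTop_of_strictMonoOn_Ici {q : ℕ → ℕ} {a : ℕ} (hq : StrictMonoOn q (Set.Ici a)) :
    Filter.Tendsto q Filter.atTop Filter.atTop := by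
  refine (Filter.tendsto_add_atTop_iff_nat a).1 (StrictMono.tendsto_atTop fun m n hmn => ?_)
  exact hq (Nat.le_add_left a m) (Nat.le_add_left a n) (Nat.add_lt_add_right hmn a)

theorem eventually_pow_le_rpow_of_factoredNumbers {q : ℕ → ℕ} (hq : StrictMonoOn q (Set.Ici 1))
    (hqS : ∀ n, 1 ≤ n → q n ∈ Nat.factoredNumbers S) (κ : ℕ) {δ : ℝ} (hδ : 0 < δ) :
    ∀ᶠ m : ℕ in Filter.atTop, (m : ℝ) ^ κ ≤ (q m : ℝ) ^ δ := by
  filter_upwards [Filter.eventually_ge_atTop 1, (tendsto_atTop_of_strictMonoOn_Ici hq).eventually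
    (eventually_natLog_two_add_one_pow_le_rpow (S.card * κ) hδ)] with m hm hqm
  have hcard : m ≤ (Nat.log 2 (q m) + 1) ^ S.card := by
    have hinj : Set.InjOn q (Finset.Icc 1 m) :=
      hq.injOn.mono fun i hi => (Finset.mem_Icc.1 hi).1
    calc m = ((Finset.Icc 1 m).image q).card := by rw [Finset.card_image_of_injOn hinj]; simp
      _ ≤ _ := card_le_of_mem_factoredNumbers
        (Finset.forall_mem_image.2 fun i hi => hqS i (Finset.mem_Icc.1 hi).1)
        (Finset.forall_mem_image.2 fun i hi =>
          hq.monotoneOn (Finset.mem_Icc.1 hi).1 hm (Finset.mem_Icc.1 hi).2)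
  calc (m : ℝ) ^ κ ≤ ((Nat.log 2 (q m) + 1 : ℝ) ^ S.card) ^ κ := by
        gcongr
        exact_mod_cast hcard
    _ ≤ (q m : ℝ) ^ δ := by rwa [← pow_mul]

end Growth

end SmoothNumbers

theorem statement11_general (S : Finset ℕ) {q : ℕ → ℕ} (hq : StrictMonoOn q (Set.Ici 1))
    (hqS : ∀ n, 1 ≤ n → q n ∈ Nat.factoredNumbers S) {α : ℝ} (hα1 : α < 1) (κ : ℕ) :
    ∃ m₀ : ℕ, 1 ≤ m₀ ∧ ∀ m n : ℕ, m₀ ≤ m → m < n →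
      ∀ s t : ℕ, 1 ≤ s → 1 ≤ t →
        1 ≤ |(s : ℝ) * (q m : ℝ) - (t : ℝ) * (q n : ℝ)| →
        |(s : ℝ) * (q m : ℝ) - (t : ℝ) * (q n : ℝ)| < (q m : ℝ) ^ α →
        m ^ κ < s := by
  have hqP : ∀ n, 1 ≤ n → q n ∈ Nat.factoredNumbers (S.filter Nat.Prime) := fun n hn =>
    Nat.mem_factoredNumbers'.2 fun p hp hpq =>
      Finset.mem_filter.2 ⟨Nat.mem_factoredNumbers'.1 (hqS n hn) p hp hpq, hp⟩
  obtain ⟨δ, hδ, hgap⟩ := exists_rpow_lt_of_abs_sub_lt_rpow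
    (fun p hp => (Finset.mem_filter.1 hp).2 : ∀ p ∈ S.filter Nat.Prime, p.Prime) hα1
  obtain ⟨m₀, hm₀⟩ := Filter.eventually_atTop.1
    (((tendsto_atTop_of_strictMonoOn_Ici hq).eventually hgap).and
      (eventually_pow_le_rpow_of_factoredNumbers hq hqP κ hδ))
  refine ⟨max 1 m₀, le_max_left _ _, fun m n hm hmn s t hs ht hne hlt => ?_⟩
  have hm1 : 1 ≤ m := (le_max_left _ _).trans hm
  have hn1 : 1 ≤ n := hm1.trans hmn.le
  obtain ⟨hgap, hgrowth⟩ := hm₀ m ((le_max_right _ _).trans hm)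
  have hst : s * q m ≠ t * q n := fun h => by
    rw [← Nat.cast_mul, ← Nat.cast_mul, h, sub_self, abs_zero] at hne
    exact one_pos.not_ge hne
  exact_mod_cast hgrowth.trans_lt (hgap (hqP m hm1) (q n) (hqP n hn1) (hq hm1 hn1 hmn) s t
    (Nat.one_le_iff_ne_zero.1 hs) (Nat.one_le_iff_ne_zero.1 ht) hst hlt)

theorem statement11
    (k : ℕ) (hk : 1 ≤ k)
    (S : Finset ℕ) (hS : ∀ p ∈ S, p.Prime) (hcard : S.card = k)
    (q : ℕ → ℕ) (hqpos : ∀ n, 1 ≤ n → 0 < q n)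
    (hqmono : ∀ n, 1 ≤ n → q n < q (n + 1))
    (hsmooth : ∀ n, 1 ≤ n → ∀ p : ℕ, p.Prime → p ∣ q n → p ∈ S)
    (α : ℝ) (hα : 0 < α) (hα1 : α < 1) :
    ∃ m₀ : ℕ, 1 ≤ m₀ ∧ ∀ m n : ℕ, m₀ ≤ m → m < n →
      ∀ s t : ℕ, 1 ≤ s → 1 ≤ t →
        1 ≤ |(s : ℝ) * (q m : ℝ) - (t : ℝ) * (q n : ℝ)| →
        |(s : ℝ) * (q m : ℝ) - (t : ℝ) * (q n : ℝ)| < (q m : ℝ) ^ α →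
        m ^ 12 < s :=
  statement11_general S
    (strictMonoOn_of_lt_add_one Set.ordConnected_Ici fun n _ hn _ => hqmono n hn)
    (fun n hn => Nat.mem_factoredNumbers'.2 (hsmooth n hn)) hα1 12
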